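/- arXiv:2202.00304 — 2 statements merged into one kernel-verified Lean document; each statement's English description precedes it below -/
import Mathlib

section
/- Let N be a nonzero finite length graded S-module that is NOT cyclic, with syzygy bundles P_1(N), P_2(N) on P^n (n ≥ 5). Then H^2_*(S²P_1(N)) ≠ 0 and H^4_*(Λ²P_2(N)) ≠ 0. -/
/-!
Background setup (the paper works on projective space `ℙⁿ` over a field `K`):
we encode a coherent sheaf on `ℙⁿ_K` by a module `M` over the homogeneous coordinate
ring `S = K[X₀,…,Xₙ]` (namely `M = Γ_*` of the sheaf), and the intermediate cohomology
module `H^i_*(F) = ⊕_ν H^i(ℙⁿ, F(ν))` (for `i ≥ 1`) by the local cohomology module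
`H^{i+1}_𝔪(M)` at the irrelevant maximal ideal `𝔪 = (X₀,…,Xₙ)`, to which it is
canonically isomorphic.
-/

open CategoryTheory TensorProduct

noncomputable section

/-- The homogeneous coordinate ring `S = K[X₀,…,Xₙ]` of `ℙⁿ`. -/
abbrev PolyS (K : Type) [Field K] (n : ℕ) : Type := MvPolynomial (Fin (n+1)) K

variable (K : Type) [Field K] (n : ℕ)

/-- The irrelevant maximal ideal `𝔪 = (X₀,…,Xₙ)` of `S`. -/
def irrel : Ideal (PolyS K n) := Ideal.span (Set.range MvPolynomial.X)

/-- `H^i_*` of the sheaf on `ℙⁿ` associated to the `S`-module `M`, encoded (for `i ≥ 1`)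
as the local cohomology module `H^{i+1}_𝔪(M)`. -/
def Hstar (i : ℕ) (M : Type) [AddCommGroup M] [Module (PolyS K n) M] :
    ModuleCat (PolyS K n) :=
  (localCohomology (irrel K n) (i+1)).obj (ModuleCat.of (PolyS K n) M)

/-- `M` is (the module of sections `Γ_*` of) an algebraic vector bundle on `ℙⁿ`:
finitely generated, depth `≥ 2` at `𝔪` (i.e. `H⁰_𝔪(M) = H¹_𝔪(M) = 0`, so `M = Γ_*(M̃)`),
and locally free at every prime other than the irrelevant ideal. -/
structure IsBundleModule (M : Type) [AddCommGroup M] [Module (PolyS K n) M] : Prop where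
  finite : Module.Finite (PolyS K n) M
  h0 : Subsingleton ((localCohomology (irrel K n) 0).obj (ModuleCat.of (PolyS K n) M))
  h1 : Subsingleton ((localCohomology (irrel K n) 1).obj (ModuleCat.of (PolyS K n) M))
  locFree : ∀ p : PrimeSpectrum (PolyS K n), p.asIdeal ≠ irrel K n →
    Module.Free (Localization.AtPrime p.asIdeal) (LocalizedModule p.asIdeal.primeCompl M)

/-- `M` represents a vector bundle of rank two on `ℙⁿ`. -/
structure IsRankTwoBundleModule (M : Type) [AddCommGroup M] [Module (PolyS K n) M]
    extends IsBundleModule K n M : Prop where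
  rank2 : ∀ p : PrimeSpectrum (PolyS K n), p.asIdeal ≠ irrel K n →
    Module.rank (Localization.AtPrime p.asIdeal) (LocalizedModule p.asIdeal.primeCompl M) = 2

/-- A finite length module which is moreover supported at the irrelevant ideal: the
(ungraded avatar of the) notion of a *graded* `S`-module of finite length. -/
def IsGradedFiniteLength (N : Type) [AddCommGroup N] [Module (PolyS K n) N] : Prop :=
  IsFiniteLength (PolyS K n) N ∧
    ∃ c : ℕ, (irrel K n) ^ c ≤ Module.annihilator (PolyS K n) N

/-- A minimal graded free resolution `⋯ → L₁ → L₀ → N → 0` of an `S`-module `N`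
(minimality: all differentials have entries in the maximal ideal `𝔪`).
Here `d i : L (i+1) → L i` and `P_k(N)`, the `k`-th syzygy module, is `range (d k)`,
i.e. the image of `f_{k+1} : L_{k+1} → L_k`. -/
structure MinimalResolution (N : Type) [AddCommGroup N] [Module (PolyS K n) N] where
  L : ℕ → Type
  [addCommGroup : ∀ i, AddCommGroup (L i)]
  [module : ∀ i, Module (PolyS K n) (L i)]
  free : ∀ i, Module.Free (PolyS K n) (L i)
  finite : ∀ i, Module.Finite (PolyS K n) (L i)
  d : ∀ i : ℕ, L (i+1) →ₗ[PolyS K n] L i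
  aug : L 0 →ₗ[PolyS K n] N
  aug_surjective : Function.Surjective aug
  exact0 : LinearMap.range (d 0) = LinearMap.ker aug
  exact : ∀ i : ℕ, LinearMap.range (d (i+1)) = LinearMap.ker (d i)
  minimal : ∀ i : ℕ, LinearMap.range (d i) ≤ (irrel K n) • (⊤ : Submodule (PolyS K n) (L i))
  minimal0 : LinearMap.ker aug ≤ (irrel K n) • (⊤ : Submodule (PolyS K n) (L 0))

attribute [instance] MinimalResolution.addCommGroup MinimalResolution.module

/-- The second symmetric power `S²M` of a module. -/
def Sym2M (R : Type) [CommRing R] (M : Type) [AddCommGroup M] [Module R M] : Type :=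
  (TensorProduct R M M) ⧸
    Submodule.span R {z : TensorProduct R M M | ∃ x y : M, z = x ⊗ₜ[R] y - y ⊗ₜ[R] x}

instance (R : Type) [CommRing R] (M : Type) [AddCommGroup M] [Module R M] :
    AddCommGroup (Sym2M R M) := by unfold Sym2M; infer_instance

instance (R : Type) [CommRing R] (M : Type) [AddCommGroup M] [Module R M] :
    Module R (Sym2M R M) := by unfold Sym2M; infer_instance


section Bridge
open Abelian Opposite Limits

variable {R : Type} [CommRing R]

/-- The transition map `R/I^t' → R/I^t`. -/
def trMap (I : Ideal R) {t t' : ℕ} (h : t ≤ t') :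
    ModuleCat.of R (R ⧸ I ^ t') ⟶ ModuleCat.of R (R ⧸ I ^ t) :=
  ModuleCat.ofHom <| Submodule.mapQ _ _ LinearMap.id (Ideal.pow_le_pow_right h)

/-- Vanishing of local cohomology, phrased with Yoneda Ext groups. -/
def LCVan (I : Ideal R) (i : ℕ) (M : Type) [AddCommGroup M] [Module R M] : Prop :=
  ∀ (t : ℕ) (e : Abelian.Ext (ModuleCat.of R (R ⧸ I ^ t)) (ModuleCat.of R M) i),
    ∃ (t' : ℕ) (h : t ≤ t'), (Ext.mk₀ (trMap I h)).comp e (zero_add i) = 0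

lemma homologyUnop_natural {V : Type*} [Category* V] [Abelian V] {ι : Type*} {c : ComplexShape ι}
    {K L : HomologicalComplex Vᵒᵖ c} (ψ : K ⟶ L) (i : ι) :
    (HomologicalComplex.homologyMap ψ i).unop ≫ (HomologicalComplex.homologyUnop K i).inv =
    (HomologicalComplex.homologyUnop L i).inv ≫ HomologicalComplex.homologyMap
      ((HomologicalComplex.unopFunctor _ _).map ψ.op) i := by
  have h1 := HomologicalComplex.homologyOp_hom_naturality
    ((HomologicalComplex.unopFunctor _ _).map ψ.op) i
  have h2 := congrArg Quiver.Hom.unop h1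
  refine (Iso.comp_inv_eq (HomologicalComplex.homologyUnop K i)).2 ?_
  refine Eq.trans ?_ (Category.assoc _ _ _).symm
  refine (Iso.eq_inv_comp (HomologicalComplex.homologyUnop L i)).2 ?_
  exact h2

lemma ext_old_map_isoExt {X X' : ModuleCat.{0} R} (g : X' ⟶ X) (P : ProjectiveResolution X)
    (P' : ProjectiveResolution X') (φ : P'.complex ⟶ P.complex)
    (comm : φ.f 0 ≫ P.π.f 0 = P'.π.f 0 ≫ g)
    (i : ℕ) (Y : ModuleCat.{0} R) :
    ((_root_.Ext R (ModuleCat.{0} R) i).map g.op).app Y ≫ (P'.isoExt (R := R) i Y).hom =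
    (P.isoExt (R := R) i Y).hom ≫ HomologicalComplex.homologyMap
      ((HomologicalComplex.unopFunctor _ _).map
        ((((linearYoneda R (ModuleCat.{0} R)).obj Y).rightOp.mapHomologicalComplex _).map φ).op) i := by
  have := ProjectiveResolution.isoLeftDerivedObj_inv_naturality g P' P φ comm
     ((linearYoneda R (ModuleCat.{0} R)).obj Y).rightOp i
  have h2 := congrArg Quiver.Hom.unop this
  have h3 := homologyUnop_natural
    ((((linearYoneda R (ModuleCat.{0} R)).obj Y).rightOp.mapHomologicalComplex _).map φ) i
  rw [unop_comp, unop_comp] at h2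
  refine (Category.assoc _ _ _).symm.trans ?_
  refine Eq.trans ?_ (Category.assoc _ _ _).symm
  refine Eq.trans ?_ (congrArg (fun z => (P.isoLeftDerivedObj
     ((linearYoneda R (ModuleCat.{0} R)).obj Y).rightOp i).inv.unop ≫ z) h3)
  refine Eq.trans ?_ (Category.assoc _ _ _)
  exact congrArg (fun z => z ≫ _) h2

lemma exists_homology_class (K : CochainComplex (ModuleCat.{0} R) ℕ)
    (p : ℕ) (x : K.X (p+1)) (hx : K.d (p+1) (p+2) x = 0) :
    ∃ z : K.homology (p+1), ∀ (L : CochainComplex (ModuleCat.{0} R) ℕ) (ψ : K ⟶ L),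
      HomologicalComplex.homologyMap ψ (p+1) z = 0 →
      ∃ y : L.X p, L.d p (p+1) y = ψ.f (p+1) x := by
  let k : ModuleCat.of R R ⟶ K.X (p+1) := ModuleCat.ofHom (LinearMap.toSpanSingleton R _ x)
  have hk : k ≫ K.d (p+1) (p+2) = 0 := by
    ext; simp [k, hx]
  let c := K.liftCycles k (p+2) (by simp) hk
  refine ⟨K.homologyπ (p+1) (c (1 : R)), fun L ψ h => ?_⟩
  have e1 : K.homologyπ (p+1) ≫ HomologicalComplex.homologyMap ψ (p+1) =
    HomologicalComplex.cyclesMap ψ (p+1) ≫ L.homologyπ (p+1) := by simp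
  have e2 : L.homologyπ (p+1) (HomologicalComplex.cyclesMap ψ (p+1) (c (1 : R))) = 0 := by
    rw [← ModuleCat.comp_apply, ← e1, ModuleCat.comp_apply, h]
  have hex : (ShortComplex.mk (L.toCycles p (p+1)) (L.homologyπ (p+1)) (by simp)).Exact :=
    ShortComplex.exact_of_g_is_cokernel _ (L.homologyIsCokernel p (p+1) (by simp))
  rw [ShortComplex.moduleCat_exact_iff] at hex
  obtain ⟨y, hy⟩ := hex _ e2
  refine ⟨y, ?_⟩
  have e3 : L.toCycles p (p+1) ≫ L.iCycles (p+1) = L.d p (p+1) := by simp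
  rw [← e3, ModuleCat.comp_apply]
  erw [hy]
  have e4 : c ≫ HomologicalComplex.cyclesMap ψ (p+1) ≫ L.iCycles (p+1) = k ≫ ψ.f (p+1) := by
    simp [c]
  have e5 := congrArg (fun m : ModuleCat.of R R ⟶ _ => m.hom (1 : R)) e4
  refine Eq.trans (b := k.hom (1 : R) |> (ψ.f (p+1)).hom) e5 ?_
  simp [k]

lemma elem_transfer {A A' H H' : ModuleCat.{0} R} (e : A ≅ H) (e' : A' ≅ H') (a : A ⟶ A')
    (m : H ⟶ H') (hn : a ≫ e'.hom = e.hom ≫ m) (z : H) (h0 : a (e.inv z) = 0) : m z = 0 := by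
  have h2 : m = e.inv ≫ a ≫ e'.hom := by rw [hn]; simp
  rw [h2, ModuleCat.comp_apply, ModuleCat.comp_apply, h0, map_zero]

lemma lcvan_of_subsingleton (I : Ideal R) (p : ℕ) (M : Type) [AddCommGroup M] [Module R M]
    (h : Subsingleton ((localCohomology I (p+1)).obj (ModuleCat.of R M))) : LCVan I (p+1) M := by
  intro t e
  let P := fun t : ℕ => projectiveResolution (ModuleCat.of R (R ⧸ I ^ t))
  obtain ⟨f, hf, rfl⟩ := (P t).extMk_surjective e (p+2) rfl
  have key : ∃ (t' : ℕ) (h : t ≤ t'), ∃ (φ : (P t').complex ⟶ (P t).complex)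
     (_ : φ.f 0 ≫ (P t).π.f 0 = (P t').π.f 0 ≫ trMap I h) ,
     ∃ g : (P t').complex.X p ⟶ _ , (P t').complex.d (p+1) p ≫ g = φ.f (p+1) ≫ f := by
    obtain ⟨z, hz⟩ := exists_homology_class
      ((P t).complex.linearYonedaObj R (ModuleCat.of R M)) p f hf
    let D := localCohomology.diagram (localCohomology.idealPowersDiagram I) (p+1)
    have hc : HasColimit D := localCohomology.hasColimitDiagram _ _
    let ev := (evaluation (ModuleCat.{0} R) (ModuleCat.{0} R)).obj (ModuleCat.of R M)
    have hcol : IsColimit (ev.mapCocone (colimit.cocone D)) :=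
      isColimitOfPreserves ev (colimit.isColimit D)
    let z' : (D ⋙ ev).obj (op (op t)) := ((P t).isoExt (R := R) (p+1) (ModuleCat.of R M)).inv z
    have hsub : Subsingleton (ev.mapCocone (colimit.cocone D)).pt := h
    obtain ⟨k, a, b, hab⟩ := Concrete.isColimit_exists_of_rep_eq (D ⋙ ev) hcol z' (0 : (D ⋙ ev).obj (op (op t)))
      (hsub.elim _ _)
    have htt : t ≤ k.unop.unop := a.unop.unop.down.down
    refine ⟨k.unop.unop, htt, ProjectiveResolution.lift (trMap I htt) _ _,
      ProjectiveResolution.lift_commutes_zero _ _ _, ?_⟩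
    have hn := ext_old_map_isoExt (trMap I htt) (P t) (P k.unop.unop)
      (ProjectiveResolution.lift (trMap I htt) _ _)
      (ProjectiveResolution.lift_commutes_zero _ _ _) (p+1) (ModuleCat.of R M)
    have h0 : ((_root_.Ext R (ModuleCat.{0} R) (p+1)).map (trMap I htt).op).app (ModuleCat.of R M) z' = 0 := by
      refine Eq.trans hab ?_
      exact map_zero _
    have hz' := hz ((P k.unop.unop).complex.linearYonedaObj R (ModuleCat.of R M))
      ((HomologicalComplex.unopFunctor _ _).map
        ((((linearYoneda R (ModuleCat.{0} R)).obj
          (ModuleCat.of R M)).rightOp.mapHomologicalComplex _).map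
           (ProjectiveResolution.lift (trMap I htt) (P k.unop.unop) (P t))).op) (by
      exact elem_transfer _ _ _ _ hn z h0)
    obtain ⟨g, hg⟩ := hz'
    exact ⟨g, hg⟩
  obtain ⟨t', h, φ, comm, g, hg⟩ := key
  refine ⟨t', h, ?_⟩
  have := ProjectiveResolution.mk₀_comp_extMk (R := P t) f (p+2) rfl hf (R' := P t') (g := trMap I h) ⟨φ, comm⟩
  rw [this, ProjectiveResolution.extMk_eq_zero_iff _ _ _ _ _ p rfl]
  exact ⟨g, hg⟩
end Bridge

section LES
open Abelian

variable {R : Type} [CommRing R]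

/-- Short exact sequence of linear maps as a short complex in `ModuleCat`. -/
abbrev sesC {A B C : Type} [AddCommGroup A] [Module R A] [AddCommGroup B] [Module R B]
    [AddCommGroup C] [Module R C] (f : A →ₗ[R] B) (g : B →ₗ[R] C) (h : g ∘ₗ f = 0) :
    ShortComplex (ModuleCat.{0} R) :=
  ShortComplex.mk (ModuleCat.ofHom f) (ModuleCat.ofHom g) (by
    rw [← ModuleCat.ofHom_comp, h]; rfl)

lemma sesC_exact {A B C : Type} [AddCommGroup A] [Module R A] [AddCommGroup B] [Module R B]
    [AddCommGroup C] [Module R C] (f : A →ₗ[R] B) (g : B →ₗ[R] C)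
    (hf : Function.Injective f) (hfg : Function.Exact f g) (hg : Function.Surjective g) :
    (sesC f g hfg.linearMap_comp_eq_zero).ShortExact where
  exact := (ShortComplex.moduleCat_exact_iff _).2 fun x hx => by
    obtain ⟨y, hy⟩ := (hfg x).1 hx
    exact ⟨y, hy⟩
  mono_f := (ModuleCat.mono_iff_injective _).2 hf
  epi_g := (ModuleCat.epi_iff_surjective _).2 hg

lemma trMap_comp (I : Ideal R) {t t' t'' : ℕ} (h : t ≤ t') (h' : t' ≤ t'') :
    trMap I h' ≫ trMap I h = trMap I (h.trans h') := by
  ext x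
  rfl

section
variable {A B C : Type} [AddCommGroup A] [Module R A] [AddCommGroup B] [Module R B]
    [AddCommGroup C] [Module R C] {f : A →ₗ[R] B} {g : B →ₗ[R] C} (I : Ideal R)

lemma lcvan_right
    (hf : Function.Injective f) (hfg : Function.Exact f g) (hg : Function.Surjective g)
    (i : ℕ) (hB : LCVan I i B) (hA : LCVan I (i+1) A) : LCVan I i C := by
  intro t e
  have S := sesC_exact f g hf hfg hg
  obtain ⟨t', h, h0⟩ := hA t (e.comp S.extClass rfl)
  rw [← Ext.comp_assoc _ _ _ (zero_add i) rfl (by omega)] at h0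
  obtain ⟨b, hb⟩ := Ext.covariant_sequence_exact₃ _ S _ rfl h0
  obtain ⟨t'', h', h1⟩ := hB t' b
  refine ⟨t'', h.trans h', ?_⟩
  rw [← trMap_comp I h h', ← Ext.mk₀_comp_mk₀_assoc, ← hb,
    ← Ext.comp_assoc_of_third_deg_zero, h1, Ext.zero_comp]

lemma lcvan_mid
    (hf : Function.Injective f) (hfg : Function.Exact f g) (hg : Function.Surjective g)
    (i : ℕ) (hA : LCVan I i A) (hC : LCVan I i C) : LCVan I i B := by
  intro t e
  have S := sesC_exact f g hf hfg hg
  obtain ⟨t', h, h0⟩ := hC t (e.comp (Ext.mk₀ (ModuleCat.ofHom g)) (add_zero i))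
  rw [← Ext.comp_assoc_of_third_deg_zero] at h0
  obtain ⟨b, hb⟩ := Ext.covariant_sequence_exact₂ _ S _ h0
  obtain ⟨t'', h', h1⟩ := hA t' b
  refine ⟨t'', h.trans h', ?_⟩
  rw [← trMap_comp I h h', ← Ext.mk₀_comp_mk₀_assoc, ← hb,
    ← Ext.comp_assoc_of_third_deg_zero, h1, Ext.zero_comp]

lemma lcvan_left
    (hf : Function.Injective f) (hfg : Function.Exact f g) (hg : Function.Surjective g)
    (i : ℕ) (hC : LCVan I i C) (hB : LCVan I (i+1) B) : LCVan I (i+1) A := by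
  intro t e
  have S := sesC_exact f g hf hfg hg
  obtain ⟨t', h, h0⟩ := hB t (e.comp (Ext.mk₀ (ModuleCat.ofHom f)) (add_zero _))
  rw [← Ext.comp_assoc_of_third_deg_zero] at h0
  obtain ⟨b, hb⟩ := Ext.covariant_sequence_exact₁ _ S _ h0 rfl
  obtain ⟨t'', h', h1⟩ := hC t' b
  refine ⟨t'', h.trans h', ?_⟩
  rw [← trMap_comp I h h', ← Ext.mk₀_comp_mk₀_assoc, ← hb,
    ← Ext.comp_assoc _ _ _ (zero_add i) rfl (by omega), h1, Ext.zero_comp]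

lemma lcvan_retract (s : A →ₗ[R] B) (r : B →ₗ[R] A) (hrs : r ∘ₗ s = LinearMap.id)
    (i : ℕ) (hB : LCVan I i B) : LCVan I i A := by
  intro t e
  obtain ⟨t', h, h0⟩ := hB t (e.comp (Ext.mk₀ (ModuleCat.ofHom s)) (add_zero _))
  refine ⟨t', h, ?_⟩
  have : e = (e.comp (Ext.mk₀ (ModuleCat.ofHom s)) (add_zero _)).comp
      (Ext.mk₀ (ModuleCat.ofHom r)) (add_zero _) := by
    rw [Ext.comp_assoc_of_third_deg_zero, Ext.mk₀_comp_mk₀, ← ModuleCat.ofHom_comp, hrs]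
    exact (Ext.comp_mk₀_id e).symm
  rw [this, ← Ext.comp_assoc_of_third_deg_zero, h0, Ext.zero_comp]

lemma lcvan_equiv (s : A ≃ₗ[R] B) (i : ℕ) (hB : LCVan I i B) : LCVan I i A :=
  lcvan_retract I s.toLinearMap s.symm.toLinearMap (by ext; simp) i hB

lemma lcvan_pi {ι : Type} [Fintype ι] [DecidableEq ι] (i : ℕ) (hB : ∀ (t : ℕ)
    (e : Abelian.Ext (ModuleCat.of R (R ⧸ I ^ t)) (ModuleCat.of R B) i), e = 0) :
    LCVan I i (ι → B) := by
  intro t e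
  refine ⟨t, le_rfl, ?_⟩
  have h1 : 𝟙 (ModuleCat.of R (ι → B)) =
      ∑ j : ι, ModuleCat.ofHom (LinearMap.proj j) ≫
        ModuleCat.ofHom (LinearMap.single R (fun _ => B) j) := by
    ext x j
    simp [ModuleCat.hom_sum, Finset.sum_apply, Pi.single_apply]
  have h2 : e = 0 := by
    rw [← Ext.comp_mk₀_id e, h1, Ext.mk₀_sum, Ext.comp_sum]
    refine Finset.sum_eq_zero fun j _ => ?_
    rw [← Ext.mk₀_comp_mk₀, ← Ext.comp_assoc_of_third_deg_zero, hB t (e.comp _ _), Ext.zero_comp]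
  rw [h2, Ext.comp_zero]

end

/-- Vanishing of Ext from all modules killed by a power of `I`. -/
def EVan (I : Ideal R) (i : ℕ) (M : Type) [AddCommGroup M] [Module R M] : Prop :=
  ∀ (t : ℕ) (e : Abelian.Ext (ModuleCat.of R (R ⧸ I ^ t)) (ModuleCat.of R M) i), e = 0

lemma evan_step (I : Ideal R) {M M' : Type} [AddCommGroup M] [Module R M] [AddCommGroup M']
    [Module R M'] (x : R) (hx : x ∈ I) (hreg : ∀ m : M, x • m = 0 → m = 0) (g : M →ₗ[R] M')
    (hg : Function.Surjective g) (hk : ∀ m, g m = 0 ↔ ∃ m', x • m' = m) (i : ℕ)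
    (h : ∀ j, j + 1 = i → EVan I j M') : EVan I i M := by
  intro t e
  have hinj : Function.Injective (LinearMap.lsmul R M x) := by
    rw [injective_iff_map_eq_zero]; exact hreg
  have S := sesC_exact (LinearMap.lsmul R M x) g hinj (fun m => hk m) hg
  have hxe : ∀ e : Abelian.Ext (ModuleCat.of R (R ⧸ I ^ t)) (ModuleCat.of R M) i,
      x • e = 0 → e = 0 := by
    intro e he
    have h1 : e.comp (Ext.mk₀ (ModuleCat.ofHom (LinearMap.lsmul R M x))) (add_zero i) = 0 := by
      rw [← he, Ext.smul_eq_comp_mk₀]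
      rfl
    rcases i with _ | j
    · have : Mono (ModuleCat.ofHom (LinearMap.lsmul R M x)) := (ModuleCat.mono_iff_injective _).2 hinj
      refine Ext.postcomp_mk₀_injective_of_mono _ (ModuleCat.ofHom (LinearMap.lsmul R M x)) ?_
      rw [map_zero]; exact h1
    · obtain ⟨b, hb⟩ := Ext.covariant_sequence_exact₁ _ S _ h1 rfl
      rw [← hb, h j rfl t b, Ext.zero_comp]
  have hpow : ∀ s : ℕ, ∀ e : Abelian.Ext (ModuleCat.of R (R ⧸ I ^ t)) (ModuleCat.of R M) i,
      x ^ s • e = 0 → e = 0 := by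
    intro s
    induction s with
    | zero => intro e he; simpa using he
    | succ s ih => intro e he; exact ih e (hxe _ (by rw [smul_smul, ← pow_succ']; exact he))
  refine hpow t e ?_
  have : x ^ t • e = (Ext.mk₀ (x ^ t • 𝟙 (ModuleCat.of R (R ⧸ I ^ t)))).comp e (zero_add i) := by
    simp [Ext.mk₀_smul]
  rw [this]
  have h0 : x ^ t • 𝟙 (ModuleCat.of R (R ⧸ I ^ t)) = 0 := by
    ext
    change x ^ t • (Ideal.Quotient.mk (I ^ t) 1) = 0
    rw [← Ideal.Quotient.mk_eq_mk, ← Submodule.Quotient.mk_smul, Submodule.Quotient.mk_eq_zero]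
    simpa using Ideal.pow_mem_pow hx t
  rw [h0]; simp

end LES

section FreeVan
open MvPolynomial

variable {K : Type} [Field K] {n : ℕ}

/-- The ideal generated by the first `k` variables. -/
def JJ (K : Type) [Field K] (n k : ℕ) : Ideal (PolyS K n) :=
  Ideal.span (X '' {j : Fin (n+1) | j.val < k})

lemma JJ_succ (k : ℕ) (hk : k < n + 1) :
    JJ K n (k+1) = Ideal.span {X (⟨k, hk⟩ : Fin (n+1))} ⊔ JJ K n k := by
  rw [JJ, JJ, ← Ideal.span_insert, ← Set.image_insert_eq]
  congr 2
  ext j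
  simp only [Set.mem_ofPred_eq, Set.mem_insert_iff, Fin.ext_iff]
  omega

lemma JJ_reg (k : ℕ) (hk : k < n + 1) (p : PolyS K n)
    (h : X (⟨k, hk⟩ : Fin (n+1)) * p ∈ JJ K n k) : p ∈ JJ K n k := by
  rw [JJ, mem_ideal_span_X_image] at h ⊢
  intro m hm
  have hm' : m + Finsupp.single (⟨k, hk⟩ : Fin (n+1)) 1 ∈
      (X (⟨k, hk⟩ : Fin (n+1)) * p : PolyS K n).support := by
    rw [mem_support_iff, mul_comm, coeff_mul_X]
    exact mem_support_iff.1 hm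
  obtain ⟨i, hi, hi'⟩ := h _ hm'
  refine ⟨i, hi, ?_⟩
  have hne : (⟨k, hk⟩ : Fin (n+1)) ≠ i := by
    intro h; subst h; simp at hi
  simpa [Finsupp.single_apply, hne] using hi'

lemma evan_JJ : ∀ (i k : ℕ), i + k ≤ n → EVan (irrel K n) i (PolyS K n ⧸ JJ K n k) := by
  intro i
  induction i using Nat.strong_induction_on with
  | _ i ih =>
  intro k hik
  have hk : k < n + 1 := by omega
  have hle : JJ K n k ≤ JJ K n (k+1) := by
    rw [JJ_succ k hk]; exact le_sup_right
  refine evan_step (M' := PolyS K n ⧸ JJ K n (k+1)) (irrel K n) (X (⟨k, hk⟩ : Fin (n+1)))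
    (Ideal.subset_span ⟨_, rfl⟩) ?_ (Submodule.factor hle) (Submodule.factor_surjective hle) ?_ i ?_
  · intro m hm
    obtain ⟨p, rfl⟩ := Submodule.Quotient.mk_surjective _ m
    rw [← Submodule.Quotient.mk_smul, Submodule.Quotient.mk_eq_zero] at hm
    rw [Submodule.Quotient.mk_eq_zero]
    exact JJ_reg k hk p hm
  · intro m
    obtain ⟨p, rfl⟩ := Submodule.Quotient.mk_surjective _ m
    have : Submodule.factor hle (Submodule.Quotient.mk p) = Submodule.Quotient.mk p := rfl
    rw [this, Submodule.Quotient.mk_eq_zero, JJ_succ k hk]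
    constructor
    · intro h
      obtain ⟨y, hy, z, hz, rfl⟩ := Submodule.mem_sup.1 h
      obtain ⟨a, rfl⟩ := Ideal.mem_span_singleton.1 hy
      refine ⟨Submodule.Quotient.mk a, ?_⟩
      rw [← Submodule.Quotient.mk_smul, Submodule.Quotient.eq]
      rw [smul_eq_mul, sub_add_cancel_left]
      exact neg_mem hz
    · rintro ⟨m', hm'⟩
      obtain ⟨a, rfl⟩ := Submodule.Quotient.mk_surjective _ m'
      rw [← Submodule.Quotient.mk_smul, Submodule.Quotient.eq] at hm'
      rw [← sub_sub_cancel ((X (⟨k, hk⟩ : Fin (n+1)) : PolyS K n) • a) p]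
      refine sub_mem ?_ ?_
      · exact Submodule.mem_sup_left (Ideal.mem_span_singleton.2 ⟨a, rfl⟩)
      · exact Submodule.mem_sup_right hm'
  · rintro j rfl
    exact ih j (by omega) (k+1) (by omega)

lemma lcvan_free (F : Type) [AddCommGroup F] [Module (PolyS K n) F] [Module.Free (PolyS K n) F]
    [Module.Finite (PolyS K n) F] (i : ℕ) (hi : i ≤ n) : LCVan (irrel K n) i F := by
  classical
  have h0 := evan_JJ (K := K) (n := n) i 0 (by omega)
  have hJ : JJ K n 0 = ⊥ := by simp [JJ]
  have h1 := lcvan_pi (irrel K n) (ι := Fin (Module.finrank (PolyS K n) F)) i h0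
  let b := Module.finBasis (PolyS K n) F
  let e : (PolyS K n ⧸ JJ K n 0) ≃ₗ[PolyS K n] PolyS K n := Submodule.quotEquivOfEqBot _ hJ
  exact lcvan_equiv _ (b.equivFun.trans (LinearEquiv.piCongrRight fun _ => e.symm)) i h1

end FreeVan

section Torsion
open Abelian

variable {R : Type} [CommRing R]

/-- If `e : Ext^{i+1}(C', M)`, `B'` projective, then pulling back along a map of short exact
sequences is zero as soon as the pull back of Ext^i along the left map is zero. -/
lemma ext_pull {A B C A' B' C' M : Type} [AddCommGroup A] [Module R A] [AddCommGroup B]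
    [Module R B] [AddCommGroup C] [Module R C]
    [AddCommGroup A'] [Module R A'] [AddCommGroup B']
    [Module R B'] [AddCommGroup C'] [Module R C'] [AddCommGroup M] [Module R M]
    {f : A →ₗ[R] B} {g : B →ₗ[R] C} {f' : A' →ₗ[R] B'} {g' : B' →ₗ[R] C'}
    (hf : Function.Injective f) (hfg : Function.Exact f g) (hg : Function.Surjective g)
    (hf' : Function.Injective f') (hfg' : Function.Exact f' g') (hg' : Function.Surjective g')
    (a : A →ₗ[R] A') (b : B →ₗ[R] B') (c : C →ₗ[R] C')
    (h1 : f' ∘ₗ a = b ∘ₗ f) (h2 : g' ∘ₗ b = c ∘ₗ g) (i : ℕ)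
    (e' : Ext (ModuleCat.of R A') (ModuleCat.of R M) i)
    (h0 : (Ext.mk₀ (ModuleCat.ofHom a)).comp e' (zero_add i) = 0) :
    (Ext.mk₀ (ModuleCat.ofHom c)).comp
      ((sesC_exact f' g' hf' hfg' hg').extClass.comp e' (Nat.add_comm 1 i)) (zero_add (i+1)) = 0 := by
  let φ : sesC f g hfg.linearMap_comp_eq_zero ⟶ sesC f' g' hfg'.linearMap_comp_eq_zero :=
    { τ₁ := ModuleCat.ofHom a, τ₂ := ModuleCat.ofHom b, τ₃ := ModuleCat.ofHom c
      comm₁₂ := by simp only [← ModuleCat.ofHom_comp, h1]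
      comm₂₃ := by simp only [← ModuleCat.ofHom_comp, h2] }
  have hn := ShortComplex.ShortExact.extClass_naturality (sesC_exact f g hf hfg hg)
    (sesC_exact f' g' hf' hfg' hg') φ
  rw [← Ext.comp_assoc (a₁₂ := 1) _ _ _ (zero_add 1) (Nat.add_comm 1 i) (by omega)]
  change (((Ext.mk₀ φ.τ₃).comp _ _).comp e' _) = 0
  rw [← hn, Ext.comp_assoc (a₂₃ := i) _ _ _ (add_zero 1) (zero_add i) (by omega)]
  erw [h0, Ext.comp_zero]

lemma ext_lift {A' B' C' M : Type} 
    [AddCommGroup A'] [Module R A'] [AddCommGroup B']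
    [Module R B'] [AddCommGroup C'] [Module R C'] [AddCommGroup M] [Module R M]
    {f' : A' →ₗ[R] B'} {g' : B' →ₗ[R] C'} [Module.Projective R B']
    (hf' : Function.Injective f') (hfg' : Function.Exact f' g') (hg' : Function.Surjective g')
    (i : ℕ) (e : Ext (ModuleCat.of R C') (ModuleCat.of R M) (i+1)) :
    ∃ e' : Ext (ModuleCat.of R A') (ModuleCat.of R M) i, e = ((sesC_exact f' g' hf' hfg' hg').extClass.comp e' (Nat.add_comm 1 i)) := by
  have : Projective (ModuleCat.of R B') := (IsProjective.iff_projective B').1 inferInstance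
  obtain ⟨e', h⟩ := Ext.contravariant_sequence_exact₃ (sesC_exact f' g' hf' hfg' hg') _ e
    (Ext.eq_zero_of_projective (P := ModuleCat.of R B') _) (Nat.add_comm 1 i)
  exact ⟨e', h.symm⟩

lemma ext_step {F X M : Type} [AddCommGroup F] [Module R F] [AddCommGroup X]
    [Module R X] [AddCommGroup M] [Module R M] (q : F →ₗ[R] X) (hq : Function.Surjective q)
    (F' : Submodule R F) (X' : Submodule R X) (hmap : F'.map q = X') {i : ℕ}
    (e' : Ext (ModuleCat.of R (LinearMap.ker q)) (ModuleCat.of R M) i)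
    (h0 : (Ext.mk₀ (ModuleCat.ofHom (Submodule.inclusion
      (inf_le_right : F' ⊓ LinearMap.ker q ≤ LinearMap.ker q)))).comp e' (zero_add i) = 0) :
    (Ext.mk₀ (ModuleCat.ofHom X'.subtype)).comp
      ((sesC_exact (LinearMap.ker q).subtype q (Submodule.injective_subtype _)
        (LinearMap.exact_subtype_ker_map q) hq).extClass.comp e' (Nat.add_comm 1 i))
        (zero_add (i+1)) = 0 := by
  let q' : F' →ₗ[R] X' := q.restrict (by
    intro x hx
    rw [← hmap]; exact ⟨x, hx, rfl⟩)
  have hq' : Function.Surjective q' := by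
    rintro ⟨x, hx⟩
    rw [← hmap] at hx
    obtain ⟨y, hy, rfl⟩ := hx
    exact ⟨⟨y, hy⟩, rfl⟩
  refine ext_pull (f := Submodule.inclusion (inf_le_left : F' ⊓ LinearMap.ker q ≤ F')) (g := q')
    (Submodule.inclusion_injective _) ?_ hq' (Submodule.injective_subtype _)
    (LinearMap.exact_subtype_ker_map q) hq _ F'.subtype _ (by ext; rfl) (by ext; rfl) i e' h0
  rintro ⟨x, hx⟩
  constructor
  · intro h
    exact ⟨⟨x, hx, congrArg Subtype.val h⟩, rfl⟩
  · rintro ⟨⟨y, hy, hy'⟩, h⟩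
    have : y = x := congrArg Subtype.val h
    subst this
    exact Subtype.ext hy'

lemma ext_ar [IsNoetherianRing R] (I : Ideal R) (M : Type) [AddCommGroup M] [Module R M] (c : ℕ)
    (hc : I ^ c ≤ Module.annihilator R M) (i : ℕ) :
    ∀ (X : Type) [AddCommGroup X] [Module R X] [Module.Finite R X]
      (e : Ext (ModuleCat.of R X) (ModuleCat.of R M) i), ∃ s : ℕ, ∀ (Y : Type)
      [AddCommGroup Y] [Module R Y] (u : Y →ₗ[R] X),
      LinearMap.range u ≤ I ^ s • (⊤ : Submodule R X) →
      (Ext.mk₀ (ModuleCat.ofHom u)).comp e (zero_add i) = 0 := by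
  induction i with
  | zero =>
    intro X _ _ _ e
    obtain ⟨f, rfl⟩ := (Ext.mk₀_bijective _ _).2 e
    refine ⟨c, fun Y _ _ u hu => ?_⟩
    rw [Ext.mk₀_comp_mk₀]
    have : ModuleCat.ofHom u ≫ f = 0 := by
      ext y
      have hy : u y ∈ I ^ c • (⊤ : Submodule R X) := hu ⟨y, rfl⟩
      change f.hom (u y) = 0
      have key : I ^ c • (⊤ : Submodule R X) ≤ LinearMap.ker f.hom := by
        rw [Submodule.smul_le]
        intro r hr x _
        rw [LinearMap.mem_ker, map_smul]
        exact Module.mem_annihilator.1 (hc hr) _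
      exact key hy
    rw [this, Ext.mk₀_zero]
  | succ i ih =>
    intro X _ _ _ e
    obtain ⟨m, q, hq⟩ := Module.Finite.exists_fin' R X
    obtain ⟨e', rfl⟩ := ext_lift (f' := (LinearMap.ker q).subtype) (g' := q) (Submodule.injective_subtype _)
      (LinearMap.exact_subtype_ker_map q) hq i e
    obtain ⟨s', hs'⟩ := ih (LinearMap.ker q) e'
    obtain ⟨k, hk⟩ := Ideal.exists_pow_inf_eq_pow_smul I (LinearMap.ker q)
    refine ⟨s' + k, fun Y _ _ u hu => ?_⟩
    have h0 : (Ext.mk₀ (ModuleCat.ofHom (Submodule.inclusion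
        (inf_le_right : (I ^ (s'+k) • ⊤) ⊓ LinearMap.ker q ≤ LinearMap.ker q)))).comp e' (zero_add i) = 0 := by
      apply hs'
      rintro _ ⟨⟨x, hx, hxG⟩, rfl⟩
      have : x ∈ I ^ s' • (I ^ k • (⊤ : Submodule R _) ⊓ LinearMap.ker q) := by
        have h3 := hk (s'+k) (by omega)
        rw [Nat.add_sub_cancel] at h3
        rw [← h3]; exact ⟨hx, hxG⟩
      have : x ∈ I ^ s' • LinearMap.ker q := Submodule.smul_mono le_rfl inf_le_right this
      have h4 : Submodule.map (LinearMap.ker q).subtype (I ^ s' • (⊤ : Submodule R (LinearMap.ker q)))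
          = I ^ s' • LinearMap.ker q := by
        rw [Submodule.map_smul'', Submodule.map_top, Submodule.range_subtype]
      rw [← h4] at this
      obtain ⟨z, hz, rfl⟩ := this
      exact hz
    have key := ext_step q hq (I ^ (s'+k) • ⊤) (I ^ (s'+k) • ⊤) (by
        simp only [Submodule.map_smul'', Submodule.map_top, LinearMap.range_eq_top.2 hq]) e' h0
    have hu' : ModuleCat.ofHom u = ModuleCat.ofHom (LinearMap.codRestrict (I ^ (s'+k) • ⊤ : Submodule R X) u (fun y => hu ⟨y, rfl⟩))
      ≫ ModuleCat.ofHom (I ^ (s'+k) • ⊤ : Submodule R X).subtype := by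
      rw [← ModuleCat.ofHom_comp]; rfl
    rw [hu', ← Ext.mk₀_comp_mk₀_assoc, key, Ext.comp_zero]

lemma lcvan_torsion [IsNoetherianRing R] (I : Ideal R) (M : Type) [AddCommGroup M] [Module R M]
    (c : ℕ) (hc : I ^ c ≤ Module.annihilator R M) (i : ℕ) : LCVan I (i+1) M := by
  intro t e
  obtain ⟨e', rfl⟩ := ext_lift (f' := (I ^ t).subtype) (g' := (I ^ t).mkQ)
    (Submodule.injective_subtype _)
      (LinearMap.exact_subtype_mkQ _) (Submodule.mkQ_surjective _) i e
  obtain ⟨s, hs⟩ := ext_ar I M c hc i (I ^ t : Ideal R) e'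
  have hle : I ^ (t + s) ≤ I ^ t := Ideal.pow_le_pow_right (by omega)
  refine ⟨t + s, by omega, ?_⟩
  refine ext_pull (f := (I ^ (t+s)).subtype) (g := (I ^ (t+s)).mkQ) (Submodule.injective_subtype _)
      (LinearMap.exact_subtype_mkQ _) (Submodule.mkQ_surjective _) (Submodule.injective_subtype _)
      (LinearMap.exact_subtype_mkQ (I ^ t)) (Submodule.mkQ_surjective _) (Submodule.inclusion hle)
      LinearMap.id (Submodule.mapQ _ _ LinearMap.id (Ideal.pow_le_pow_right (by omega)))
      (by ext; rfl) (by ext; rfl) i e' (hs _ _ ?_)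
  rintro _ ⟨⟨x, hx⟩, rfl⟩
  have h4 : Submodule.map (I ^ t).subtype (I ^ s • (⊤ : Submodule R (I ^ t : Ideal R))) = I ^ (t + s) := by
    rw [Submodule.map_smul'', Submodule.map_top, Submodule.range_subtype, pow_add, mul_comm]
    rfl
  rw [← h4] at hx
  obtain ⟨z, hz, hzx⟩ := hx
  have : z = Submodule.inclusion hle ⟨x, by rw [← h4]; exact ⟨z, hz, hzx⟩⟩ := Subtype.ext hzx
  rw [← this]; exact hz

end Torsion

section Almost

variable {R : Type} [CommRing R] {ι : Type} (x : ι → R)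

/-- Injective up to powers of each `x j`. -/
def AInj {A B : Type} [AddCommGroup A] [Module R A] [AddCommGroup B] [Module R B]
    (f : A →ₗ[R] B) : Prop := ∀ j, ∃ k : ℕ, ∀ a, f a = 0 → x j ^ k • a = 0

/-- Surjective up to powers of each `x j`. -/
def ASurj {A B : Type} [AddCommGroup A] [Module R A] [AddCommGroup B] [Module R B]
    (f : A →ₗ[R] B) : Prop := ∀ j, ∃ k : ℕ, ∀ b, ∃ a, f a = x j ^ k • b

/-- Exact in the middle up to powers of each `x j`. -/
def AExact {A B C : Type} [AddCommGroup A] [Module R A] [AddCommGroup B] [Module R B]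
    [AddCommGroup C] [Module R C]
    (f : A →ₗ[R] B) (g : B →ₗ[R] C) : Prop :=
  ∀ j, ∃ k : ℕ, ∀ b, g b = 0 → ∃ a, f a = x j ^ k • b

variable {x} [IsNoetherianRing R]

lemma lcvan_tors (M : Type) [AddCommGroup M] [Module R M] (h : ∀ j, ∃ k : ℕ, ∀ m : M, x j ^ k • m = 0)
    (i : ℕ) : LCVan (Ideal.span (Set.range x)) (i+1) M := by
  have hle : Ideal.span (Set.range x) ≤ (Module.annihilator R M).radical := by
    rw [Ideal.span_le]
    rintro _ ⟨j, rfl⟩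
    obtain ⟨k, hk⟩ := h j
    exact ⟨k, Module.mem_annihilator.2 hk⟩
  obtain ⟨c, hc⟩ := Ideal.exists_pow_le_of_le_radical_of_fg hle (IsNoetherian.noetherian _)
  exact lcvan_torsion _ M c hc i

variable {A B C : Type} [AddCommGroup A] [Module R A] [AddCommGroup B] [Module R B]
    [AddCommGroup C] [Module R C] {f : A →ₗ[R] B} {g : B →ₗ[R] C}

/-- submodules differing by torsion -/
lemma lcvan_le {P Q : Submodule R B} (hPQ : P ≤ Q) (h : ∀ j, ∃ k : ℕ, ∀ b ∈ Q, x j ^ k • b ∈ P) (i : ℕ)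
    (hP : LCVan (Ideal.span (Set.range x)) (i+1) P) : LCVan (Ideal.span (Set.range x)) (i+1) Q := by
  refine lcvan_mid _ (f := Submodule.inclusion hPQ) (g := (LinearMap.range (Submodule.inclusion hPQ)).mkQ)
    (Submodule.inclusion_injective _) (LinearMap.exact_map_mkQ_range _)
    (Submodule.mkQ_surjective _) (i+1) hP (lcvan_tors _ ?_ i)
  intro j
  obtain ⟨k, hk⟩ := h j
  refine ⟨k, fun m => ?_⟩
  obtain ⟨⟨b, hb⟩, rfl⟩ := Submodule.mkQ_surjective _ m
  rw [← map_smul]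
  refine (Submodule.Quotient.mk_eq_zero _).2 ⟨⟨_, hk b hb⟩, rfl⟩

lemma lcvan_ge {P Q : Submodule R B} (hPQ : P ≤ Q) (h : ∀ j, ∃ k : ℕ, ∀ b ∈ Q, x j ^ k • b ∈ P) (i : ℕ)
    (hQ : LCVan (Ideal.span (Set.range x)) (i+2) Q) : LCVan (Ideal.span (Set.range x)) (i+2) P := by
  refine lcvan_left _ (f := Submodule.inclusion hPQ) (g := (LinearMap.range (Submodule.inclusion hPQ)).mkQ)
    (Submodule.inclusion_injective _) (LinearMap.exact_map_mkQ_range _)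
    (Submodule.mkQ_surjective _) (i+1) (lcvan_tors _ ?_ i) hQ
  intro j
  obtain ⟨k, hk⟩ := h j
  refine ⟨k, fun m => ?_⟩
  obtain ⟨⟨b, hb⟩, rfl⟩ := Submodule.mkQ_surjective _ m
  rw [← map_smul]
  refine (Submodule.Quotient.mk_eq_zero _).2 ⟨⟨_, hk b hb⟩, rfl⟩

lemma lcvan_range (hf : AInj x f) (i : ℕ) (hA : LCVan (Ideal.span (Set.range x)) i A) :
    LCVan (Ideal.span (Set.range x)) i (LinearMap.range f) := by
  refine lcvan_right _ (f := (LinearMap.ker f).subtype) (g := f.rangeRestrict)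
    (Submodule.injective_subtype _) ?_ f.surjective_rangeRestrict i hA (lcvan_tors _ ?_ i)
  · intro a
    constructor
    · intro h
      exact ⟨⟨a, congrArg Subtype.val h⟩, rfl⟩
    · rintro ⟨⟨a, ha⟩, rfl⟩
      exact Subtype.ext ha
  · intro j
    obtain ⟨k, hk⟩ := hf j
    refine ⟨k, fun m => ?_⟩
    exact Subtype.ext (hk m.1 m.2)

lemma lcvan_ker (hf : AInj x f) (hfg : AExact x f g) (hgf : g ∘ₗ f = 0)
    (i : ℕ) (hA : LCVan (Ideal.span (Set.range x)) (i+1) A) :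
    LCVan (Ideal.span (Set.range x)) (i+1) (LinearMap.ker g) := by
  refine lcvan_le (P := LinearMap.range f) ?_ ?_ i (lcvan_range hf _ hA)
  · rintro _ ⟨a, rfl⟩
    exact LinearMap.congr_fun hgf a
  · intro j
    obtain ⟨k, hk⟩ := hfg j
    refine ⟨k, fun b hb => ?_⟩
    obtain ⟨a, ha⟩ := hk b hb
    exact ⟨a, ha⟩

/-- right vanishing for almost exact sequences -/
lemma alcvan_right (hf : AInj x f) (hfg : AExact x f g) (hgf : g ∘ₗ f = 0)
    (hg : Function.Surjective g) (i : ℕ) (hB : LCVan (Ideal.span (Set.range x)) i B)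
    (hA : LCVan (Ideal.span (Set.range x)) (i+1) A) : LCVan (Ideal.span (Set.range x)) i C :=
  lcvan_right _ (f := (LinearMap.ker g).subtype) (g := g) (Submodule.injective_subtype _)
    (LinearMap.exact_subtype_ker_map g) hg i hB (lcvan_ker hf hfg hgf i hA)

/-- middle vanishing for almost exact sequences -/
lemma alcvan_mid (hf : AInj x f) (hfg : AExact x f g) (hgf : g ∘ₗ f = 0)
    (hg : ASurj x g) (i : ℕ) (hA : LCVan (Ideal.span (Set.range x)) (i+2) A)
    (hC : LCVan (Ideal.span (Set.range x)) (i+2) C) : LCVan (Ideal.span (Set.range x)) (i+2) B := by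
  refine lcvan_mid _ (f := (LinearMap.ker g).subtype) (g := g.rangeRestrict)
    (Submodule.injective_subtype _) ?_ g.surjective_rangeRestrict (i+2)
    (lcvan_ker hf hfg hgf (i+1) hA) ?_
  · intro a
    constructor
    · intro h
      exact ⟨⟨a, congrArg Subtype.val h⟩, rfl⟩
    · rintro ⟨⟨a, ha⟩, rfl⟩
      exact Subtype.ext ha
  · refine lcvan_ge (Q := ⊤) le_top ?_ i (lcvan_equiv _ Submodule.topEquiv _ hC)
    intro j
    obtain ⟨k, hk⟩ := hg j
    refine ⟨k, fun b _ => ?_⟩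
    obtain ⟨a, ha⟩ := hk b
    exact ⟨a, ha⟩

end Almost

section Sq
variable {R : Type} [CommRing R] {M P Q : Type} [AddCommGroup M] [Module R M]
  [AddCommGroup P] [Module R P] [AddCommGroup Q] [Module R Q]

/-- Projection to the symmetric square. -/
def s2mk (R : Type) [CommRing R] (M : Type) [AddCommGroup M] [Module R M] :
    M ⊗[R] M →ₗ[R] Sym2M R M :=
  Submodule.mkQ (Submodule.span R {z : M ⊗[R] M | ∃ x y : M, z = x ⊗ₜ[R] y - y ⊗ₜ[R] x})

lemma s2mk_surj : Function.Surjective (s2mk R M) := Submodule.mkQ_surjective _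

lemma s2mk_ker : LinearMap.ker (s2mk R M) =
    Submodule.span R {z : M ⊗[R] M | ∃ x y : M, z = x ⊗ₜ[R] y - y ⊗ₜ[R] x} := Submodule.ker_mkQ _

lemma s2mk_symm (x y : M) : s2mk R M (x ⊗ₜ y) = s2mk R M (y ⊗ₜ x) := by
  rw [← sub_eq_zero, ← map_sub, ← LinearMap.mem_ker, s2mk_ker]
  exact Submodule.subset_span ⟨x, y, rfl⟩

/-- Descent to the symmetric square. -/
def s2lift (β : M ⊗[R] M →ₗ[R] P) (h : ∀ x y, β (x ⊗ₜ y) = β (y ⊗ₜ x)) : Sym2M R M →ₗ[R] P :=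
  Submodule.liftQ _ β (by
    rw [Submodule.span_le]
    rintro _ ⟨x, y, rfl⟩
    simp [h x y])

@[simp] lemma s2lift_mk (β : M ⊗[R] M →ₗ[R] P) (h) (z) : s2lift β h (s2mk R M z) = β z := rfl

lemma s2_ext {f g : Sym2M R M →ₗ[R] P}
    (h : ∀ x y, f (s2mk R M (x ⊗ₜ y)) = g (s2mk R M (x ⊗ₜ y))) : f = g := by
  have : f ∘ₗ s2mk R M = g ∘ₗ s2mk R M := TensorProduct.ext' h
  ext z
  obtain ⟨z, rfl⟩ := s2mk_surj z
  exact LinearMap.congr_fun this z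

/-- Functoriality of the symmetric square. -/
def s2map (f : M →ₗ[R] P) : Sym2M R M →ₗ[R] Sym2M R P :=
  s2lift (s2mk R P ∘ₗ TensorProduct.map f f) (fun x y => by simp [s2mk_symm (f x)])

@[simp] lemma s2map_mk (f : M →ₗ[R] P) (x y : M) :
    s2map f (s2mk R M (x ⊗ₜ y)) = s2mk R P (f x ⊗ₜ f y) := rfl

/-- The wedge as a bilinear map. -/
def w2 (R : Type) [CommRing R] (M : Type) [AddCommGroup M] [Module R M] :
    M →ₗ[R] M →ₗ[R] ⋀[R]^2 M :=
  LinearMap.mk₂ R (fun x y => exteriorPower.ιMulti R 2 ![x, y])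
    (fun x x' y => by apply Subtype.ext; simp [ExteriorAlgebra.ιMulti_apply, add_mul])
    (fun c x y => by apply Subtype.ext; simp [ExteriorAlgebra.ιMulti_apply])
    (fun x y y' => by apply Subtype.ext; simp [ExteriorAlgebra.ιMulti_apply, mul_add])
    (fun c x y => by apply Subtype.ext; simp [ExteriorAlgebra.ιMulti_apply])

lemma w2_apply (x y : M) : w2 R M x y = exteriorPower.ιMulti R 2 ![x, y] := rfl

lemma w2_self (x : M) : w2 R M x x = 0 := by
  rw [w2_apply]
  exact AlternatingMap.map_eq_zero_of_eq _ _ (i := 0) (j := 1) rfl (by decide)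

lemma w2_swap (x y : M) : w2 R M x y = - w2 R M y x := by
  have := w2_self (R := R) (x + y)
  simp only [map_add, LinearMap.add_apply, w2_self, zero_add, add_zero] at this
  exact eq_neg_of_add_eq_zero_right this

lemma w2_ext {f g : ⋀[R]^2 M →ₗ[R] P} (h : ∀ x y, f (w2 R M x y) = g (w2 R M x y)) : f = g := by
  apply exteriorPower.linearMap_ext
  ext v
  have : v = ![v 0, v 1] := by ext i; fin_cases i <;> rfl
  rw [this]
  exact h _ _

@[simp] lemma w2_map (f : M →ₗ[R] P) (x y : M) :
    exteriorPower.map 2 f (w2 R M x y) = w2 R P (f x) (f y) := by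
  rw [w2_apply, w2_apply, exteriorPower.map_apply_ιMulti]
  congr 1
  ext i; fin_cases i <;> rfl

/-- Linear maps out of the exterior square from alternating bilinear maps. -/
def alt2 (β : M →ₗ[R] M →ₗ[R] P) (h : ∀ x, β x x = 0) : ⋀[R]^2 M →ₗ[R] P :=
  exteriorPower.alternatingMapLinearEquiv
    { toFun := fun v => β (v 0) (v 1)
      map_update_add' := by
        intro _ v i x y
        fin_cases i <;> simp 
      map_update_smul' := by
        intro _ v i c x
        fin_cases i <;> simp
      map_eq_zero_of_eq' := by
        intro v i j hv hij
        fin_cases i <;> fin_cases j <;> simp_all }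

@[simp] lemma alt2_w2 (β : M →ₗ[R] M →ₗ[R] P) (h) (x y : M) : alt2 β h (w2 R M x y) = β x y := by
  rw [alt2, w2_apply, exteriorPower.alternatingMapLinearEquiv_apply_ιMulti]
  rfl

/-- antisymmetrization -/
def asym (R : Type) [CommRing R] (M : Type) [AddCommGroup M] [Module R M] :
    ⋀[R]^2 M →ₗ[R] M ⊗[R] M :=
  alt2 (TensorProduct.mk R M M - (TensorProduct.mk R M M).flip) (by intro x; simp)

@[simp] lemma asym_w2 (x y : M) : asym R M (w2 R M x y) = x ⊗ₜ y - y ⊗ₜ x := by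
  simp [asym]

/-- symmetrization -/
def symz (R : Type) [CommRing R] (M : Type) [AddCommGroup M] [Module R M] :
    Sym2M R M →ₗ[R] M ⊗[R] M :=
  s2lift (LinearMap.id + (TensorProduct.comm R M M).toLinearMap) (by
    intro x y; simp [add_comm])

@[simp] lemma symz_mk (x y : M) : symz R M (s2mk R M (x ⊗ₜ y)) = x ⊗ₜ y + y ⊗ₜ x := by
  rfl

lemma asym_retract {ι : Type} [LinearOrder ι] (b : Module.Basis ι R M) :
     ∃ ρ : M ⊗[R] M →ₗ[R] ⋀[R]^2 M, ρ ∘ₗ asym R M = LinearMap.id := by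
  let β : M →ₗ[R] M →ₗ[R] ⋀[R]^2 M :=
    b.constr R fun i => b.constr R fun j => if i < j then w2 R M (b i) (b j) else 0
  have hβ : ∀ i j, β (b i) (b j) = if i < j then w2 R M (b i) (b j) else 0 := by
    intro i j; simp [β]
  refine ⟨TensorProduct.lift β, ?_⟩
  apply w2_ext
  suffices h : β = w2 R M + β.flip by
    intro x y
    have := LinearMap.congr_fun₂ h x y
    rw [LinearMap.add_apply, LinearMap.add_apply, LinearMap.flip_apply] at this
    simp [this]
  apply b.ext; intro i; apply b.ext; intro j
  simp only [LinearMap.add_apply, LinearMap.flip_apply, hβ]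
  rcases lt_trichotomy i j with h | h | h
  · simp [h, h.not_gt]
  · subst h; simp [w2_self]
  · simp [h, h.not_gt, w2_swap (b i) (b j)]

lemma s2_retract {ι : Type} [LinearOrder ι] (b : Module.Basis ι R M) :
     ∃ s : Sym2M R M →ₗ[R] M ⊗[R] M, s2mk R M ∘ₗ s = LinearMap.id := by
  let β : M →ₗ[R] M →ₗ[R] M ⊗[R] M :=
    b.constr R fun i => b.constr R fun j => if i ≤ j then b i ⊗ₜ b j else b j ⊗ₜ b i
  have hβ : ∀ i j, β (b i) (b j) = if i ≤ j then b i ⊗ₜ b j else b j ⊗ₜ b i := by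
    intro i j; simp [β]
  have hs : β = β.flip := by
    apply b.ext; intro i; apply b.ext; intro j
    simp only [LinearMap.flip_apply, hβ]
    rcases lt_trichotomy i j with h | h | h
    · simp [h.le, h.not_ge]
    · subst h; simp
    · simp [h.le, h.not_ge]
  have hm : β.compr₂ (s2mk R M) = (TensorProduct.mk R M M).compr₂ (s2mk R M) := by
    apply b.ext; intro i; apply b.ext; intro j
    simp only [LinearMap.compr₂_apply, hβ, TensorProduct.mk_apply]
    split_ifs
    · rfl
    · exact s2mk_symm _ _
  refine ⟨s2lift (TensorProduct.lift β) ?_, ?_⟩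
  · intro x y
    simpa using LinearMap.congr_fun₂ hs x y
  · apply s2_ext
    intro x y
    simpa using LinearMap.congr_fun₂ hm x y

end Sq

section Wedge
variable {R : Type} [CommRing R] {A B C L : Type} [AddCommGroup A] [Module R A]
  [AddCommGroup B] [Module R B] [AddCommGroup C] [Module R C] [AddCommGroup L] [Module R L]

/-- `b ∧ b' ↦ b ⊗ p b' - b' ⊗ p b`. -/
def wd (p : B →ₗ[R] C) : ⋀[R]^2 B →ₗ[R] B ⊗[R] C := TensorProduct.map LinearMap.id p ∘ₗ asym R B

@[simp] lemma wd_w2 (p : B →ₗ[R] C) (b b' : B) :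
    wd p (w2 R B b b') = b ⊗ₜ p b' - b' ⊗ₜ p b := by
  simp [wd]

/-- `b ⊗ c ↦ (p b) c`. -/
def wq (p : B →ₗ[R] C) : B ⊗[R] C →ₗ[R] Sym2M R C := s2mk R C ∘ₗ TensorProduct.map p LinearMap.id

@[simp] lemma wq_tmul (p : B →ₗ[R] C) (b : B) (c : C) :
    wq p (b ⊗ₜ c) = s2mk R C (p b ⊗ₜ c) := by
  simp [wq]

lemma wq_wd (p : B →ₗ[R] C) : wq p ∘ₗ wd p = 0 := by
  apply w2_ext
  intro x y
  simp [s2mk_symm (p x)]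

lemma wq_surj (p : B →ₗ[R] C) (hp : Function.Surjective p) : Function.Surjective (wq p) :=
  s2mk_surj.comp (TensorProduct.map_surjective hp Function.surjective_id)

/-- `b ⊗ c ↦ f b ∧ g c`. -/
def wk (f : B →ₗ[R] L) (g : C →ₗ[R] L) : B ⊗[R] C →ₗ[R] ⋀[R]^2 L :=
  TensorProduct.lift (w2 R L) ∘ₗ TensorProduct.map f g

@[simp] lemma wk_tmul (f : B →ₗ[R] L) (g : C →ₗ[R] L) (b : B) (c : C) :
    wk f g (b ⊗ₜ c) = w2 R L (f b) (g c) := by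
  simp [wk]

variable {i : A →ₗ[R] B} {p : B →ₗ[R] C} {s : C →ₗ[R] B} {r : B →ₗ[R] A} {y : R}

lemma w_inj (hri : ∀ a, r (i a) = y • a) (w : ⋀[R]^2 A) (hw : exteriorPower.map 2 i w = 0) :
    y ^ 2 • w = 0 := by
  have h : exteriorPower.map 2 r ∘ₗ exteriorPower.map 2 i = y ^ 2 • LinearMap.id := by
    apply w2_ext
    intro x x'
    simp [hri, smul_smul, sq]
  have := LinearMap.congr_fun h w
  simpa [hw] using this.symm

lemma w_mid {j : C →ₗ[R] L} {r1 : L →ₗ[R] C} 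
    (hir : ∀ b, y • b = i (r b) + s (p b)) (hrj : ∀ c, r1 (j c) = y • c)
    (hL : Function.Injective (asym R L)) (w : ⋀[R]^2 B) (hw : wd p w = 0) :
    ∃ a, exteriorPower.map 2 i a = y ^ 4 • w := by
  have h1 : y ^ 2 • LinearMap.id + exteriorPower.map 2 s ∘ₗ exteriorPower.map 2 p =
      exteriorPower.map 2 i ∘ₗ exteriorPower.map 2 r + y • (wk LinearMap.id s ∘ₗ wd p) := by
    apply w2_ext
    intro b b'
    have e1 : y ^ 2 • w2 R B b b' = w2 R B (y • b) (y • b') := by simp [smul_smul, sq]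
    have e2 : y • w2 R B b (s (p b')) = w2 R B (y • b) (s (p b')) := by simp
    have e3 : y • w2 R B b' (s (p b)) = w2 R B (y • b') (s (p b)) := by simp
    simp only [LinearMap.add_apply, LinearMap.smul_apply, LinearMap.id_apply, LinearMap.comp_apply,
      w2_map, wd_w2, map_sub, wk_tmul, smul_sub, e1, e2, e3]
    rw [hir b, hir b']
    simp only [map_add, LinearMap.add_apply]
    rw [w2_swap (s (p b')) (s (p b)), w2_swap (i (r b')) (s (p b))]
    abel
  have h2 : y ^ 2 • (exteriorPower.map 2 s ∘ₗ exteriorPower.map 2 p) =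
      exteriorPower.map 2 s ∘ₗ exteriorPower.map 2 r1 ∘ₗ exteriorPower.map 2 j ∘ₗ
        exteriorPower.map 2 p := by
    apply w2_ext
    intro b b'
    simp [hrj, smul_smul, sq]
  have h3 : asym R L ∘ₗ exteriorPower.map 2 j ∘ₗ exteriorPower.map 2 p =
      TensorProduct.map (j ∘ₗ p) j ∘ₗ wd p := by
    apply w2_ext
    intro b b'
    simp
  have h4 : exteriorPower.map 2 j (exteriorPower.map 2 p w) = 0 := by
    apply hL
    have := LinearMap.congr_fun h3 w
    simpa [hw] using this
  have h5 : y ^ 2 • exteriorPower.map 2 s (exteriorPower.map 2 p w) = 0 := by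
    have := LinearMap.congr_fun h2 w
    simpa [h4] using this
  have h6 := LinearMap.congr_fun h1 w
  simp only [LinearMap.add_apply, LinearMap.smul_apply, LinearMap.id_apply, LinearMap.comp_apply, hw,
    map_zero, smul_zero, add_zero] at h6
  refine ⟨y ^ 2 • exteriorPower.map 2 r w, ?_⟩
  rw [map_smul, ← h6, smul_add, h5, add_zero, smul_smul]
  congr 1; ring

lemma w_right (hps : ∀ c, p (s c) = y • c) (hpi : ∀ a, p (i a) = 0)
    (hir : ∀ b, y • b = i (r b) + s (p b)) (z : B ⊗[R] C) (hz : wq p z = 0) :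
    ∃ w, wd p w = y ^ 4 • z := by
  have h1 : ∃ w, TensorProduct.map p LinearMap.id (wd p w) =
      y ^ 2 • TensorProduct.map p LinearMap.id z := by
    have hm : TensorProduct.map p LinearMap.id z ∈ LinearMap.ker (s2mk R C) := hz
    rw [s2mk_ker] at hm
    generalize TensorProduct.map p LinearMap.id z = ζ at hm ⊢
    induction hm using Submodule.span_induction with
    | mem z h =>
      obtain ⟨x, x', rfl⟩ := h
      refine ⟨w2 R B (s x) (s x'), ?_⟩
      simp [hps, smul_tmul', smul_smul, sq, smul_sub]
    | zero => exact ⟨0, by simp⟩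
    | add x x' _ _ h h' =>
      obtain ⟨w, hw⟩ := h
      obtain ⟨w', hw'⟩ := h'
      exact ⟨w + w', by rw [map_add, map_add, hw, hw', smul_add]⟩
    | smul c x _ h =>
      obtain ⟨w, hw⟩ := h
      exact ⟨c • w, by rw [map_smul, map_smul, hw, smul_comm]⟩
  obtain ⟨w, hw⟩ := h1
  have h2 : y ^ 2 • LinearMap.id = wd p ∘ₗ wk (i ∘ₗ r) s +
      y • (TensorProduct.map s LinearMap.id ∘ₗ TensorProduct.map p (LinearMap.id : C →ₗ[R] C)) := by
    apply TensorProduct.ext'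
    intro b c
    have : y ^ 2 • b ⊗ₜ[R] c = y • ((y • b) ⊗ₜ[R] c) := by rw [← smul_tmul', smul_smul, sq]
    simp only [LinearMap.smul_apply, LinearMap.id_apply, this, hir b, add_tmul]
    simp [hps, hpi]
  have h3 := LinearMap.congr_fun h2 (y ^ 2 • z - wd p w)
  have h4 : TensorProduct.map p (LinearMap.id : C →ₗ[R] C) (y ^ 2 • z - wd p w) = 0 := by
    rw [map_sub, hw, map_smul, sub_self]
  simp only [LinearMap.add_apply, LinearMap.smul_apply, LinearMap.id_apply, LinearMap.comp_apply, h4,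
    map_zero, smul_zero, add_zero] at h3
  refine ⟨y ^ 2 • w + wk (i ∘ₗ r) s (y ^ 2 • z - wd p w), ?_⟩
  rw [map_add, ← h3, map_smul, smul_sub, smul_smul, add_sub_cancel]
  congr 1; ring

end Wedge

section SymSq
variable {R : Type} [CommRing R] {A B C L : Type} [AddCommGroup A] [Module R A]
  [AddCommGroup B] [Module R B] [AddCommGroup C] [Module R C] [AddCommGroup L] [Module R L]

/-- `b b' ↦ b ⊗ p b' + b' ⊗ p b`. -/
def sd (p : B →ₗ[R] C) : Sym2M R B →ₗ[R] B ⊗[R] C := TensorProduct.map LinearMap.id p ∘ₗ symz R B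

@[simp] lemma sd_mk (p : B →ₗ[R] C) (b b' : B) :
    sd p (s2mk R B (b ⊗ₜ b')) = b ⊗ₜ p b' + b' ⊗ₜ p b := by
  simp [sd]

/-- `b ⊗ c ↦ f b · g c`. -/
def sk (f : B →ₗ[R] L) (g : C →ₗ[R] L) : B ⊗[R] C →ₗ[R] Sym2M R L :=
  s2mk R L ∘ₗ TensorProduct.map f g

@[simp] lemma sk_tmul (f : B →ₗ[R] L) (g : C →ₗ[R] L) (b : B) (c : C) :
    sk f g (b ⊗ₜ c) = s2mk R L (f b ⊗ₜ g c) := by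
  simp [sk]

lemma symz_s2map (p : B →ₗ[R] C) : symz R C ∘ₗ s2map p =
    TensorProduct.map p LinearMap.id ∘ₗ sd p := by
  apply s2_ext
  intro x y
  simp

variable {i : A →ₗ[R] B} {p : B →ₗ[R] C} {s : C →ₗ[R] B} {r : B →ₗ[R] A} {y : R}

lemma sd_s2map (hpi : ∀ a, p (i a) = 0) : sd p ∘ₗ s2map i = 0 := by
  apply s2_ext
  intro x y
  simp [hpi]

lemma s2map_s2map (hpi : ∀ a, p (i a) = 0) : s2map p ∘ₗ s2map i = 0 := by
  apply s2_ext
  intro x y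
  simp [hpi]

lemma s_inj (hri : ∀ a, r (i a) = y • a) (w : Sym2M R A) (hw : s2map i w = 0) :
    y ^ 2 • w = 0 := by
  have h : s2map r ∘ₗ s2map i = y ^ 2 • LinearMap.id := by
    apply s2_ext
    intro x x'
    simp [hri, smul_smul, sq, ← smul_tmul']
  have := LinearMap.congr_fun h w
  simpa [hw] using this.symm

lemma s_mid (hir : ∀ b, y • b = i (r b) + s (p b)) (w : Sym2M R B) (hw : sd p w = 0)
    (hw' : s2map p w = 0) :
    ∃ a, s2map i a = y ^ 2 • w := by
  have h1 : y ^ 2 • LinearMap.id + s2map s ∘ₗ s2map p =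
      s2map i ∘ₗ s2map r + y • (sk LinearMap.id s ∘ₗ sd p) := by
    apply s2_ext
    intro b b'
    have e1 : y ^ 2 • s2mk R B (b ⊗ₜ b') = s2mk R B ((y • b) ⊗ₜ (y • b')) := by
      simp [smul_smul, sq, ← smul_tmul']
    have e2 : y • s2mk R B (b ⊗ₜ (s (p b'))) = s2mk R B ((y • b) ⊗ₜ (s (p b'))) := by
      simp [← smul_tmul']
    have e3 : y • s2mk R B (b' ⊗ₜ (s (p b))) = s2mk R B ((y • b') ⊗ₜ (s (p b))) := by
      simp [← smul_tmul']
    simp only [LinearMap.add_apply, LinearMap.smul_apply, LinearMap.id_apply, LinearMap.comp_apply,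
      s2map_mk, sd_mk, map_add, sk_tmul, smul_add, e1, e2, e3]
    rw [hir b, hir b']
    simp only [map_add, add_tmul, tmul_add]
    rw [s2mk_symm (s (p b')) (s (p b)), s2mk_symm (i (r b')) (s (p b))]
    abel
  have h6 := LinearMap.congr_fun h1 w
  simp only [LinearMap.add_apply, LinearMap.smul_apply, LinearMap.id_apply, LinearMap.comp_apply, hw,
    hw', map_zero, smul_zero, add_zero] at h6
  exact ⟨_, h6.symm⟩

lemma sd_s2map_s (hps : ∀ c, p (s c) = y • c) (w : Sym2M R C) :
    sd p (s2map s w) = y • TensorProduct.map s LinearMap.id (symz R C w) := by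
  have h : sd p ∘ₗ s2map s = y • (TensorProduct.map s LinearMap.id ∘ₗ symz R C) := by
    apply s2_ext
    intro x x'
    simp [hps]
  exact LinearMap.congr_fun h w

lemma s2map_p_s (hps : ∀ c, p (s c) = y • c) (w : Sym2M R C) :
    s2map p (s2map s w) = y ^ 2 • w := by
  have h : s2map p ∘ₗ s2map s = y ^ 2 • LinearMap.id := by
    apply s2_ext
    intro x x'
    simp [hps, smul_smul, sq, ← smul_tmul']
  exact LinearMap.congr_fun h w

lemma s_coker (hps : ∀ c, p (s c) = y • c) (hpi : ∀ a, p (i a) = 0)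
    (hir : ∀ b, y • b = i (r b) + s (p b)) (z : B ⊗[R] C) (w : Sym2M R C)
    (hz : TensorProduct.map p LinearMap.id z = symz R C w) :
    ∃ v, sd p v = y ^ 2 • z := by
  have h2 : y ^ 2 • LinearMap.id = sd p ∘ₗ sk (i ∘ₗ r) s +
      y • (TensorProduct.map s LinearMap.id ∘ₗ TensorProduct.map p (LinearMap.id : C →ₗ[R] C)) := by
    apply TensorProduct.ext'
    intro b c
    have : y ^ 2 • b ⊗ₜ[R] c = y • ((y • b) ⊗ₜ[R] c) := by rw [← smul_tmul', smul_smul, sq]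
    simp only [LinearMap.smul_apply, LinearMap.id_apply, this, hir b, add_tmul]
    simp [hps, hpi]
  have h3 := LinearMap.congr_fun h2 z
  simp only [LinearMap.add_apply, LinearMap.smul_apply, LinearMap.id_apply, LinearMap.comp_apply, hz,
    ← sd_s2map_s hps] at h3
  exact ⟨sk (i ∘ₗ r) s z + s2map s w, by rw [map_add, h3]⟩

/-- The cokernel of symmetrization is a retract of `C ⊗ C` if `2` is zero or invertible. -/
lemma q0_retract {ι : Type} [LinearOrder ι] (b : Module.Basis ι R C)
    (h2 : (2 : R) = 0 ∨ ∃ u : R, 2 * u = 1) :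
    ∃ σ : (C ⊗[R] C ⧸ LinearMap.range (symz R C)) →ₗ[R] C ⊗[R] C,
      (LinearMap.range (symz R C)).mkQ ∘ₗ σ = LinearMap.id := by
  suffices h : ∃ τ : C ⊗[R] C →ₗ[R] C ⊗[R] C, (∀ x x', τ (x ⊗ₜ x' + x' ⊗ₜ x) = 0) ∧
      ∀ z, τ z - z ∈ LinearMap.range (symz R C) by
    obtain ⟨τ, h1, h2⟩ := h
    have h3 : τ ∘ₗ symz R C = 0 := by
      apply s2_ext; intro x x'; simpa using h1 x x'
    refine ⟨Submodule.liftQ _ τ ?_, ?_⟩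
    · rintro _ ⟨w, rfl⟩
      exact LinearMap.congr_fun h3 w
    · ext x x'
      exact (Submodule.Quotient.eq _).2 (h2 (x ⊗ₜ x'))
  rcases h2 with h2 | ⟨u, hu⟩
  · obtain ⟨s, hs⟩ := s2_retract b
    refine ⟨s ∘ₗ s2mk R C, ?_, ?_⟩
    · intro x x'
      rw [LinearMap.comp_apply, map_add, s2mk_symm x' x, ← two_smul R, h2, zero_smul, map_zero]
    · intro z
      have : s (s2mk R C z) - z ∈ LinearMap.ker (s2mk R C) := by
        rw [LinearMap.mem_ker, map_sub]
        have := LinearMap.congr_fun hs (s2mk R C z)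
        simp only [LinearMap.comp_apply, LinearMap.id_apply] at this
        rw [this, sub_self]
      rw [s2mk_ker] at this
      refine Submodule.span_le.2 ?_ this
      rintro _ ⟨x, x', rfl⟩
      refine ⟨s2mk R C (x ⊗ₜ x'), ?_⟩
      rw [symz_mk, sub_eq_add_neg]
      congr 1
      rw [eq_neg_iff_add_eq_zero, ← two_smul R, h2, zero_smul]
  · refine ⟨u • (LinearMap.id - (TensorProduct.comm R C C).toLinearMap), ?_, ?_⟩
    · intro x x'
      simp [add_comm (x ⊗ₜ[R] x')]
    · intro z
      refine ⟨- u • s2mk R C z, ?_⟩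
      have h : ∀ z, symz R C (s2mk R C z) = z + TensorProduct.comm R C C z := fun z => rfl
      rw [map_smul, h]
      have : z = u • z + u • z := by rw [← add_smul, ← two_mul, hu, one_smul]
      simp only [LinearMap.smul_apply, LinearMap.sub_apply, LinearMap.id_apply,
        LinearEquiv.coe_coe, smul_sub, neg_smul, smul_add]
      generalize TensorProduct.comm R C C z = c
      linear_combination (norm := module) (1 : R) • this

end SymSq

section Main1
open MvPolynomial Abelian

/-- Splitting of `A → B → C` up to `x j ^ c`. -/
def Spl {R : Type} [CommRing R] {A B C : Type} [AddCommGroup A] [Module R A]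
    [AddCommGroup B] [Module R B] [AddCommGroup C] [Module R C] (y : R)
    (i : A →ₗ[R] B) (p : B →ₗ[R] C) (s : C →ₗ[R] B) (r : B →ₗ[R] A) : Prop :=
  (∀ c, p (s c) = y • c) ∧ (∀ a, r (i a) = y • a) ∧ (∀ b, y • b = i (r b) + s (p b))

lemma lcvan_zero_torsion {R : Type} [CommRing R] (I : Ideal R) (M : Type) [AddCommGroup M]
    [Module R M] (h : LCVan I 0 M) (q : M) (t : ℕ) (hq : ∀ a ∈ I ^ t, a • q = 0) : q = 0 := by
  let f : (R ⧸ I ^ t) →ₗ[R] M := Submodule.liftQ _ (LinearMap.toSpanSingleton R M q) (by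
    intro a ha; exact hq a ha)
  obtain ⟨t', ht, h0⟩ := h t (Ext.mk₀ (ModuleCat.ofHom f))
  rw [Ext.mk₀_comp_mk₀, Ext.mk₀_eq_zero_iff] at h0
  have h1 := LinearMap.congr_fun (congrArg ModuleCat.Hom.hom h0) (Submodule.Quotient.mk (1 : R))
  have h2 : f (Submodule.Quotient.mk (1 : R)) = 0 := h1
  have h3 : f (Submodule.Quotient.mk (1 : R)) = (1 : R) • q := rfl
  rw [h3, one_smul] at h2
  exact h2

variable {K : Type} [Field K] {n : ℕ}

lemma lcvan_ret_free {F M : Type} [AddCommGroup F] [Module (PolyS K n) F] [AddCommGroup M]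
    [Module (PolyS K n) M] [Module.Free (PolyS K n) F] [Module.Finite (PolyS K n) F]
    (s : M →ₗ[PolyS K n] F) (r : F →ₗ[PolyS K n] M) (h : r ∘ₗ s = LinearMap.id) (i : ℕ)
    (hi : i ≤ n) : LCVan (irrel K n) i M := lcvan_retract _ s r h i (lcvan_free F i hi)

lemma lcvan_s2 {F : Type} [AddCommGroup F] [Module (PolyS K n) F] 
    [Module.Free (PolyS K n) F] [Module.Finite (PolyS K n) F] (i : ℕ)
    (hi : i ≤ n) : LCVan (irrel K n) i (Sym2M (PolyS K n) F) := by
  obtain ⟨s, hs⟩ := s2_retract (Module.finBasis (PolyS K n) F)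
  exact lcvan_ret_free s _ hs i hi

lemma lcvan_w2 {F : Type} [AddCommGroup F] [Module (PolyS K n) F] 
    [Module.Free (PolyS K n) F] [Module.Finite (PolyS K n) F] (i : ℕ)
    (hi : i ≤ n) : LCVan (irrel K n) i (⋀[PolyS K n]^2 F) := by
  obtain ⟨s, hs⟩ := asym_retract (Module.finBasis (PolyS K n) F)
  exact lcvan_ret_free _ s hs i hi

lemma lcvan_q0 {F : Type} [AddCommGroup F] [Module (PolyS K n) F] 
    [Module.Free (PolyS K n) F] [Module.Finite (PolyS K n) F] (i : ℕ)
    (hi : i ≤ n) : LCVan (irrel K n) i (F ⊗[PolyS K n] F ⧸ LinearMap.range (symz (PolyS K n) F)) := by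
  have h2 : (2 : PolyS K n) = 0 ∨ ∃ u : PolyS K n, 2 * u = 1 := by
    have e : (2 : PolyS K n) = C (2 : K) := (map_ofNat C 2).symm
    by_cases h : (2 : K) = 0
    · left; rw [e, h, map_zero]
    · right; exact ⟨C (2 : K)⁻¹, by rw [e, ← map_mul, mul_inv_cancel₀ h, map_one]⟩
  obtain ⟨s, hs⟩ := q0_retract (Module.finBasis (PolyS K n) F) h2
  exact lcvan_ret_free s _ hs i hi

lemma sym_part (hn : 3 ≤ n) {A B C : Type} [AddCommGroup A] [Module (PolyS K n) A]
    [AddCommGroup B] [Module (PolyS K n) B] [AddCommGroup C] [Module (PolyS K n) C]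
    [Module.Free (PolyS K n) B] [Module.Finite (PolyS K n) B]
    [Module.Free (PolyS K n) C] [Module.Finite (PolyS K n) C]
    (i : A →ₗ[PolyS K n] B) (p : B →ₗ[PolyS K n] C) (hpi : ∀ a, p (i a) = 0)
    (c : ℕ) (hs : ∀ j, ∃ s r, Spl ((X j : PolyS K n) ^ c) i p s r)
    (t : ℕ) (ht : ∀ a ∈ irrel K n ^ t, ∀ z : C, a • z ∈ LinearMap.range p)
    (V : LCVan (irrel K n) 3 (Sym2M (PolyS K n) A)) (z : C ⊗[PolyS K n] C) :
    z ∈ LinearMap.range (TensorProduct.map p (LinearMap.id : C →ₗ[PolyS K n] C)) ⊔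
      LinearMap.range (symz (PolyS K n) C) := by
  let Sy := symz (PolyS K n) C
  -- V_3 of the kernel of symmetrization
  have v1 : LCVan (irrel K n) 2 (LinearMap.range Sy) :=
    lcvan_left _ (f := (LinearMap.range Sy).subtype) (g := (LinearMap.range Sy).mkQ)
      (Submodule.injective_subtype _) (LinearMap.exact_subtype_mkQ _) (Submodule.mkQ_surjective _) 1
      (lcvan_q0 1 (by omega)) (lcvan_free _ 2 (by omega))
  have v2 : LCVan (irrel K n) 3 (LinearMap.ker Sy) := by
    refine lcvan_left _ (f := (LinearMap.ker Sy).subtype) (g := Sy.rangeRestrict)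
      (Submodule.injective_subtype _) ?_ Sy.surjective_rangeRestrict 2 v1 (lcvan_s2 3 hn)
    rw [← LinearMap.ker_rangeRestrict]
    exact LinearMap.exact_subtype_ker_map _
  -- V_3 of the kernel of `sd p`
  let f : Sym2M (PolyS K n) A →ₗ[PolyS K n] LinearMap.ker (sd p) :=
    LinearMap.codRestrict _ (s2map i) (fun w => LinearMap.congr_fun (sd_s2map hpi) w)
  let g : LinearMap.ker (sd p) →ₗ[PolyS K n] LinearMap.ker Sy :=
    LinearMap.codRestrict _ (s2map p ∘ₗ (LinearMap.ker (sd p)).subtype) (fun w => by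
      have := LinearMap.congr_fun (symz_s2map p) w.1
      rw [LinearMap.comp_apply, LinearMap.comp_apply, w.2, map_zero] at this
      exact this)
  have v3 : LCVan (irrel K n) 3 (LinearMap.ker (sd p)) := by
    refine alcvan_mid (x := (X : Fin (n+1) → PolyS K n)) (f := f) (g := g) ?_ ?_ ?_ ?_ 1 V v2
    · intro j
      obtain ⟨s, r, h1, h2, h3⟩ := hs j
      refine ⟨c * 2, fun a ha => ?_⟩
      rw [pow_mul]
      exact s_inj h2 a (congrArg Subtype.val ha)
    · intro j
      obtain ⟨s, r, h1, h2, h3⟩ := hs j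
      refine ⟨c * 2, fun b hb => ?_⟩
      rw [pow_mul]
      obtain ⟨a, ha⟩ := s_mid h3 b.1 b.2 (congrArg Subtype.val hb)
      exact ⟨a, Subtype.ext ha⟩
    · ext w
      exact LinearMap.congr_fun (s2map_s2map hpi) w
    · intro j
      obtain ⟨s, r, h1, h2, h3⟩ := hs j
      refine ⟨c * 2, fun b => ?_⟩
      rw [pow_mul]
      refine ⟨⟨s2map s b.1, ?_⟩, Subtype.ext (s2map_p_s h1 b.1)⟩
      rw [LinearMap.mem_ker, sd_s2map_s h1, b.2, map_zero, smul_zero]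
  -- V_1 of the cokernel of `sd p`
  have v4 : LCVan (irrel K n) 2 (LinearMap.range (sd p)) := by
    refine lcvan_right _ (f := (LinearMap.ker (sd p)).subtype) (g := (sd p).rangeRestrict)
      (Submodule.injective_subtype _) ?_ (sd p).surjective_rangeRestrict 2 (lcvan_s2 2 (by omega)) v3
    rw [← LinearMap.ker_rangeRestrict]
    exact LinearMap.exact_subtype_ker_map _
  have v5 : LCVan (irrel K n) 1 (B ⊗[PolyS K n] C ⧸ LinearMap.range (sd p)) :=
    lcvan_right _ (f := (LinearMap.range (sd p)).subtype) (g := (LinearMap.range (sd p)).mkQ)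
      (Submodule.injective_subtype _) (LinearMap.exact_subtype_mkQ _) (Submodule.mkQ_surjective _) 1
      (lcvan_free _ 1 (by omega)) v4
  let γ : (B ⊗[PolyS K n] C ⧸ LinearMap.range (sd p)) →ₗ[PolyS K n]
      (C ⊗[PolyS K n] C ⧸ LinearMap.range Sy) :=
    Submodule.mapQ _ _ (TensorProduct.map p LinearMap.id) (by
      rintro _ ⟨w, rfl⟩
      exact ⟨s2map p w, LinearMap.congr_fun (symz_s2map p) w⟩)
  have v6 : LCVan (irrel K n) 0 (_ ⧸ LinearMap.range γ) := by
    refine alcvan_right (x := (X : Fin (n+1) → PolyS K n)) (f := γ) (g := (LinearMap.range γ).mkQ)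
      ?_ ?_ ?_ (Submodule.mkQ_surjective _) 0 (lcvan_q0 0 (by omega)) v5
    · intro j
      obtain ⟨s, r, h1, h2, h3⟩ := hs j
      refine ⟨c * 2, fun a ha => ?_⟩
      rw [pow_mul]
      obtain ⟨b, rfl⟩ := Submodule.mkQ_surjective _ a
      obtain ⟨w, hw⟩ := (Submodule.Quotient.mk_eq_zero _).1 ha
      obtain ⟨v, hv⟩ := s_coker h1 hpi h3 b w hw.symm
      rw [← map_smul]
      exact (Submodule.Quotient.mk_eq_zero _).2 ⟨v, hv⟩
    · intro j
      refine ⟨0, fun b hb => ?_⟩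
      obtain ⟨a, ha⟩ := (Submodule.Quotient.mk_eq_zero _).1 hb
      exact ⟨a, by simpa using ha⟩
    · exact (LinearMap.exact_map_mkQ_range γ).linearMap_comp_eq_zero
  -- conclusion
  have key := lcvan_zero_torsion _ _ v6 (Submodule.Quotient.mk (Submodule.Quotient.mk z)) t (by
    intro a ha
    rw [← Submodule.Quotient.mk_smul, Submodule.Quotient.mk_eq_zero]
    induction z using TensorProduct.induction_on with
    | zero => simp
    | tmul u v =>
      obtain ⟨b, hb⟩ := ht a ha u
      refine ⟨Submodule.Quotient.mk (b ⊗ₜ v), ?_⟩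
      change Submodule.Quotient.mk (TensorProduct.map p LinearMap.id (b ⊗ₜ v)) = _
      rw [TensorProduct.map_tmul, hb, ← smul_tmul', Submodule.Quotient.mk_smul]
      rfl
    | add u v hu hv =>
      rw [Submodule.Quotient.mk_add, smul_add]
      exact add_mem hu hv)
  obtain ⟨a, ha⟩ := (Submodule.Quotient.mk_eq_zero _).1 key
  obtain ⟨b, rfl⟩ := Submodule.mkQ_surjective _ a
  have h3 : TensorProduct.map p LinearMap.id b - z ∈ LinearMap.range Sy :=
    (Submodule.Quotient.eq _).1 ha
  rw [← sub_sub_cancel (TensorProduct.map p LinearMap.id b) z]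
  exact sub_mem (Submodule.mem_sup_left ⟨b, rfl⟩) (Submodule.mem_sup_right h3)

end Main1

section Main2
open MvPolynomial

variable {K : Type} [Field K] {n : ℕ}

lemma wedge_part (hn : 4 ≤ n) {A B C L : Type} [AddCommGroup A] [Module (PolyS K n) A]
    [AddCommGroup B] [Module (PolyS K n) B] [AddCommGroup C] [Module (PolyS K n) C]
    [AddCommGroup L] [Module (PolyS K n) L]
    [Module.Free (PolyS K n) B] [Module.Finite (PolyS K n) B]
    [Module.Free (PolyS K n) L] [Module.Finite (PolyS K n) L]
    (i : A →ₗ[PolyS K n] B) (p : B →ₗ[PolyS K n] C) (hpi : ∀ a, p (i a) = 0)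
    (hp : Function.Surjective p) (k : C →ₗ[PolyS K n] L)
    (c : ℕ) (hs : ∀ j, ∃ s r, Spl ((X j : PolyS K n) ^ c) i p s r)
    (hr : ∀ j, ∃ r1 : L →ₗ[PolyS K n] C, ∀ z, r1 (k z) = ((X j : PolyS K n) ^ c) • z)
    (hBC : LCVan (irrel K n) 3 (B ⊗[PolyS K n] C))
    (V : LCVan (irrel K n) 5 (⋀[PolyS K n]^2 A)) : LCVan (irrel K n) 3 (Sym2M (PolyS K n) C) := by
  have hL : Function.Injective (asym (PolyS K n) L) := by
    obtain ⟨ρ, hρ⟩ := asym_retract (Module.finBasis (PolyS K n) L)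
    exact Function.LeftInverse.injective (g := ρ) (LinearMap.congr_fun hρ)
  have v1 : LCVan (irrel K n) 4 (LinearMap.range (wd p)) := by
    refine alcvan_right (x := (X : Fin (n+1) → PolyS K n)) (f := exteriorPower.map 2 i)
      (g := (wd p).rangeRestrict) ?_ ?_ ?_ (wd p).surjective_rangeRestrict 4 (lcvan_w2 4 hn) V
    · intro j
      obtain ⟨s, r, h1, h2, h3⟩ := hs j
      refine ⟨c * 2, fun a ha => ?_⟩
      rw [pow_mul]
      exact w_inj h2 a ha
    · intro j
      obtain ⟨s, r, h1, h2, h3⟩ := hs j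
      obtain ⟨r1, hr1⟩ := hr j
      refine ⟨c * 4, fun b hb => ?_⟩
      rw [pow_mul]
      exact w_mid h3 hr1 hL b (congrArg Subtype.val hb)
    · apply w2_ext
      intro x y
      apply Subtype.ext
      simp [hpi]
  refine alcvan_right (x := (X : Fin (n+1) → PolyS K n)) (f := (LinearMap.range (wd p)).subtype)
      (g := wq p) ?_ ?_ ?_ (wq_surj p hp) 3 hBC v1
  · intro j
    refine ⟨0, fun a ha => ?_⟩
    simpa using ha
  · intro j
    obtain ⟨s, r, h1, h2, h3⟩ := hs j
    refine ⟨c * 4, fun b hb => ?_⟩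
    rw [pow_mul]
    obtain ⟨w, hw⟩ := w_right h1 hpi h3 b hb
    exact ⟨⟨_, w, rfl⟩, hw⟩
  · ext ⟨_, w, rfl⟩
    exact LinearMap.congr_fun (wq_wd p) w

variable {N : Type} [AddCommGroup N] [Module (PolyS K n) N]

lemma lcvan_tensor (hn : 3 ≤ n) (res : MinimalResolution K n N) (c : ℕ)
    (hc : irrel K n ^ c ≤ Module.annihilator (PolyS K n) N) (F : Type) [AddCommGroup F]
    [Module (PolyS K n) F] [Module.Free (PolyS K n) F] [Module.Finite (PolyS K n) F] :
    LCVan (irrel K n) 3 (F ⊗[PolyS K n] (LinearMap.range (res.d 1))) := by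
  have := res.free; have := res.finite
  have e1 : Function.Exact (LinearMap.range (res.d 1)).subtype (res.d 0).rangeRestrict := by
    rw [res.exact 0, ← LinearMap.ker_rangeRestrict]
    exact LinearMap.exact_subtype_ker_map _
  have e0 : Function.Exact (LinearMap.range (res.d 0)).subtype res.aug := by
    rw [res.exact0]
    exact LinearMap.exact_subtype_ker_map _
  have v1 : LCVan (irrel K n) 1 (F ⊗[PolyS K n] N) := by
    refine lcvan_torsion _ _ c ?_ 0
    intro a ha
    rw [Module.mem_annihilator]
    intro z
    induction z using TensorProduct.induction_on with
    | zero => simp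
    | tmul u v => rw [← tmul_smul, Module.mem_annihilator.1 (hc ha), tmul_zero]
    | add u v hu hv => rw [smul_add, hu, hv, add_zero]
  have v2 : LCVan (irrel K n) 2 (F ⊗[PolyS K n] (LinearMap.range (res.d 0))) :=
    lcvan_left _ (f := (LinearMap.range (res.d 0)).subtype.lTensor F) (g := res.aug.lTensor F)
      (Module.Flat.lTensor_preserves_injective_linearMap _ (Submodule.injective_subtype _))
      (lTensor_exact F e0 res.aug_surjective) (LinearMap.lTensor_surjective F res.aug_surjective)
      1 v1 (lcvan_free _ 2 (by omega))
  exact lcvan_left _ (f := (LinearMap.range (res.d 1)).subtype.lTensor F)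
      (g := (res.d 0).rangeRestrict.lTensor F)
      (Module.Flat.lTensor_preserves_injective_linearMap _ (Submodule.injective_subtype _))
      (lTensor_exact F e1 (LinearMap.surjective_rangeRestrict _))
      (LinearMap.lTensor_surjective F (LinearMap.surjective_rangeRestrict _))
      2 v2 (lcvan_free _ 3 (by omega))

lemma spl_res (res : MinimalResolution K n N) (y : PolyS K n)
    (hy : y ∈ Module.annihilator (PolyS K n) N) :
    ∃ s r s' r', Spl y (LinearMap.range (res.d 1)).subtype (res.d 0) s r ∧
      Spl y (LinearMap.range (res.d 2)).subtype (res.d 1).rangeRestrict s' r' := by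
  have := res.free; have := res.finite
  have h0 : ∀ z : res.L 0, (LinearMap.lsmul _ _ y) z ∈ LinearMap.range (res.d 0) := by
    intro z
    rw [res.exact0, LinearMap.mem_ker]
    simp [Module.mem_annihilator.1 hy]
  obtain ⟨s, hs⟩ := Module.projective_lifting_property (res.d 0).rangeRestrict
    (LinearMap.codRestrict _ _ h0) (LinearMap.surjective_rangeRestrict _)
  have hs' : ∀ z, res.d 0 (s z) = y • z := fun z =>
    congrArg Subtype.val (LinearMap.congr_fun hs z)
  let r : res.L 1 →ₗ[PolyS K n] LinearMap.range (res.d 1) :=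
    LinearMap.codRestrict _ (LinearMap.lsmul _ _ y - s ∘ₗ res.d 0) (fun b => by
      rw [res.exact 0, LinearMap.mem_ker]
      simp [hs'])
  have hr : ∀ b, (r b : res.L 1) = y • b - s (res.d 0 b) := fun b => rfl
  have hri : ∀ a : LinearMap.range (res.d 1), r a.1 = y • a := by
    rintro ⟨a, ha⟩
    apply Subtype.ext
    rw [hr]
    have : res.d 0 a = 0 := by rw [res.exact 0] at ha; exact ha
    simp [this]
  obtain ⟨t, ht⟩ := Module.projective_lifting_property (res.d 1).rangeRestrict
    r (LinearMap.surjective_rangeRestrict _)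
  let s' := t ∘ₗ (LinearMap.range (res.d 1)).subtype
  have hs2 : ∀ z, (res.d 1).rangeRestrict (s' z) = y • z := fun z =>
    (LinearMap.congr_fun ht z.1).trans (hri z)
  let r' : res.L 2 →ₗ[PolyS K n] LinearMap.range (res.d 2) :=
    LinearMap.codRestrict _ (LinearMap.lsmul _ _ y - s' ∘ₗ (res.d 1).rangeRestrict) (fun b => by
      rw [res.exact 1, ← LinearMap.ker_rangeRestrict, LinearMap.mem_ker]
      simp [hs2])
  have hr' : ∀ b, (r' b : res.L 2) = y • b - s' ((res.d 1).rangeRestrict b) := fun b => rfl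
  refine ⟨s, r, s', r', ⟨hs', hri, fun b => ?_⟩, ⟨hs2, ?_, fun b => ?_⟩⟩
  · rw [Submodule.subtype_apply, hr, sub_add_cancel]
  · rintro ⟨a, ha⟩
    apply Subtype.ext
    rw [hr']
    have : (res.d 1).rangeRestrict a = 0 := by
      rw [res.exact 1, ← LinearMap.ker_rangeRestrict] at ha; exact ha
    simp [this]
  · rw [Submodule.subtype_apply, hr', sub_add_cancel]

lemma nontriv {C B : Type} [AddCommGroup B] [Module (PolyS K n) B] [AddCommGroup C]
    [Module (PolyS K n) C] (p : B →ₗ[PolyS K n] C)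
    (hp : LinearMap.range p ≤ irrel K n • (⊤ : Submodule (PolyS K n) C))
    {m : ℕ} (hm : 2 ≤ m) (b : Module.Basis (Fin m) (PolyS K n) C)
    (h : ∀ z, z ∈ LinearMap.range (TensorProduct.map p (LinearMap.id : C →ₗ[PolyS K n] C)) ⊔
      LinearMap.range (symz (PolyS K n) C)) : False := by
  let i0 : Fin m := ⟨0, by omega⟩
  let i1 : Fin m := ⟨1, by omega⟩
  have hne : i0 ≠ i1 := by simp [i0, i1]
  let φ : C ⊗[PolyS K n] C →ₗ[PolyS K n] PolyS K n :=
    LinearMap.mul' _ _ ∘ₗ TensorProduct.map (b.coord i0) (b.coord i1) -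
    LinearMap.mul' _ _ ∘ₗ TensorProduct.map (b.coord i1) (b.coord i0)
  have hφ : ∀ u v, φ (u ⊗ₜ v) = b.coord i0 u * b.coord i1 v - b.coord i1 u * b.coord i0 v := by
    intro u v; simp [φ]
  have hsy : φ ∘ₗ symz _ C = 0 := by
    apply s2_ext
    intro x y
    rw [LinearMap.comp_apply, symz_mk, map_add, hφ, hφ, LinearMap.zero_apply]
    ring
  have hpm : ∀ i u, b.coord i (p u) ∈ irrel K n := by
    intro i u
    have h1 := hp ⟨u, rfl⟩
    have h2 : irrel K n • (⊤ : Submodule (PolyS K n) C) ≤ Submodule.comap (b.coord i) (irrel K n) := by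
      rw [Submodule.smul_le]
      intro a ha z _
      simp only [Submodule.mem_comap, map_smul, smul_eq_mul]
      exact Ideal.mul_mem_right _ _ ha
    exact h2 h1
  have hle : LinearMap.range (TensorProduct.map p (LinearMap.id : C →ₗ[PolyS K n] C)) ⊔
      LinearMap.range (symz (PolyS K n) C) ≤ Submodule.comap φ (irrel K n) := by
    refine sup_le ?_ ?_
    · rintro _ ⟨z, rfl⟩
      induction z using TensorProduct.induction_on with
      | zero => simp
      | tmul u v =>
        rw [Submodule.mem_comap, TensorProduct.map_tmul, hφ]
        exact sub_mem (Ideal.mul_mem_right _ _ (hpm _ _)) (Ideal.mul_mem_right _ _ (hpm _ _))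
      | add u v hu hv => rw [map_add]; exact add_mem hu hv
    · rintro _ ⟨z, rfl⟩
      have := LinearMap.congr_fun hsy z
      rw [Submodule.mem_comap]
      change φ _ = 0 at this
      rw [this]; exact zero_mem _
  have h1 := hle (h (b i0 ⊗ₜ b i1))
  rw [Submodule.mem_comap, hφ] at h1
  simp only [Module.Basis.coord_apply, Module.Basis.repr_self, Finsupp.single_eq_same, mul_one,
    Finsupp.single_eq_of_ne hne, Finsupp.single_eq_of_ne hne.symm, mul_zero, sub_zero] at h1
  have h2 : irrel K n ≤ RingHom.ker (constantCoeff : PolyS K n →+* K) := by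
    rw [irrel, Ideal.span_le]
    rintro _ ⟨j, rfl⟩
    simp [RingHom.mem_ker]
  have := h2 h1
  rw [RingHom.mem_ker, map_one] at this
  exact one_ne_zero this

theorem main_thm
    (hn : 5 ≤ n)
    (hNfl : IsGradedFiniteLength K n N)
    (hncyc : ¬ ∃ x : N, Submodule.span (PolyS K n) {x} = ⊤)
    (res : MinimalResolution K n N) :
    ¬ Subsingleton (Hstar K n 2 (Sym2M (PolyS K n) ↥(LinearMap.range (res.d 1)))) ∧
    ¬ Subsingleton (Hstar K n 4 (⋀[PolyS K n]^2 ↥(LinearMap.range (res.d 2)))) := by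
  have := res.free; have := res.finite
  obtain ⟨-, c, hc⟩ := hNfl
  have hX : ∀ j, (X j : PolyS K n) ∈ irrel K n := by
    intro j
    rw [irrel]
    exact Ideal.subset_span ⟨j, rfl⟩
  have hyj : ∀ j, (X j : PolyS K n) ^ c ∈ Module.annihilator (PolyS K n) N := fun j =>
    hc (Ideal.pow_mem_pow (hX j) c)
  have hd0 : ∀ a : LinearMap.range (res.d 1), res.d 0 ((LinearMap.range (res.d 1)).subtype a) = 0 := by
    rintro ⟨a, ha⟩
    rw [res.exact 0] at ha; exact ha
  have hd1 : ∀ a : LinearMap.range (res.d 2), (res.d 1).rangeRestrict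
      ((LinearMap.range (res.d 2)).subtype a) = 0 := by
    rintro ⟨a, ha⟩
    rw [res.exact 1, ← LinearMap.ker_rangeRestrict] at ha; exact ha
  have hm : 2 ≤ Module.finrank (PolyS K n) (res.L 0) := by
    by_contra hlt
    apply hncyc
    let b := Module.finBasis (PolyS K n) (res.L 0)
    have htop : Submodule.span (PolyS K n) (res.aug '' Set.range b) = ⊤ := by
      rw [← Submodule.map_span, b.span_eq, Submodule.map_top, LinearMap.range_eq_top.2 res.aug_surjective]
    rw [← Set.range_comp] at htop
    rcases Nat.eq_zero_or_pos (Module.finrank (PolyS K n) (res.L 0)) with h0 | h0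
    · have : IsEmpty (Fin (Module.finrank (PolyS K n) (res.L 0))) := by rw [h0]; infer_instance
      refine ⟨0, ?_⟩
      rw [Set.range_eq_empty] at htop
      rw [← htop]; simp
    · refine ⟨res.aug (b ⟨0, h0⟩), ?_⟩
      rw [← htop]
      congr 1
      ext z
      simp only [Set.mem_singleton_iff, Set.mem_range, Function.comp]
      constructor
      · rintro rfl; exact ⟨_, rfl⟩
      · rintro ⟨k, rfl⟩
        congr 2
        apply Fin.ext
        have := k.2
        simp only; omega
  have hsym : ¬ LCVan (irrel K n) 3 (Sym2M (PolyS K n) ↥(LinearMap.range (res.d 1))) := by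
    intro V
    refine nontriv (res.d 0) (res.minimal 0) hm (Module.finBasis (PolyS K n) (res.L 0)) ?_
    refine sym_part (by omega) (LinearMap.range (res.d 1)).subtype (res.d 0) hd0 c ?_ c ?_ V
    · intro j
      obtain ⟨s, r, -, -, h, -⟩ := spl_res res _ (hyj j)
      exact ⟨s, r, h⟩
    · intro a ha z
      rw [res.exact0, LinearMap.mem_ker, map_smul]
      exact Module.mem_annihilator.1 (hc ha) _
  refine ⟨fun h => hsym (lcvan_of_subsingleton _ 2 _ h), fun h => hsym ?_⟩
  have V := lcvan_of_subsingleton _ 4 _ h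
  refine wedge_part (by omega) (LinearMap.range (res.d 2)).subtype (res.d 1).rangeRestrict hd1
    (LinearMap.surjective_rangeRestrict _) (LinearMap.range (res.d 1)).subtype c ?_ ?_
    (lcvan_tensor (by omega) res c hc _) V
  · intro j
    obtain ⟨-, -, s, r, -, h⟩ := spl_res res _ (hyj j)
    exact ⟨s, r, h⟩
  · intro j
    obtain ⟨s, r, -, -, h, -⟩ := spl_res res _ (hyj j)
    exact ⟨r, h.2.1⟩

end Main2

/-- For a nonzero finite length graded `S`-module `N` which is NOT
cyclic, with syzygy bundles `P₁(N)`, `P₂(N)` on `ℙⁿ` (`n ≥ 5`), one has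
`H²_*(S²P₁(N)) ≠ 0` and `H⁴_*(Λ²P₂(N)) ≠ 0`. -/
theorem noncyclic_syzygy_nonvanishing
    (K : Type) [Field K] (n : ℕ) (hn : 5 ≤ n)
    (N : Type) [AddCommGroup N] [Module (PolyS K n) N]
    (hN : Nontrivial N)
    (hNfl : IsGradedFiniteLength K n N)
    (hncyc : ¬ ∃ x : N, Submodule.span (PolyS K n) {x} = ⊤)
    (res : MinimalResolution K n N) :
    ¬ Subsingleton (Hstar K n 2 (Sym2M (PolyS K n) ↥(LinearMap.range (res.d 1)))) ∧
    ¬ Subsingleton (Hstar K n 4 (⋀[PolyS K n]^2 ↥(LinearMap.range (res.d 2)))) := by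
  exact main_thm hn hNfl hncyc res
end
end

section
/- Whether N is cyclic or not, for any nonzero finite length graded S-module N on P^n (n ≥ 3), the first syzygy bundle P_1(N) satisfies H^2_*(Λ²P_1(N)) ≠ 0. -/
/-!
Background setup (the paper works on projective space `ℙⁿ` over a field `K`):
we encode a coherent sheaf on `ℙⁿ_K` by a module `M` over the homogeneous coordinate
ring `S = K[X₀,…,Xₙ]` (namely `M = Γ_*` of the sheaf), and the intermediate cohomology
module `H^i_*(F) = ⊕_ν H^i(ℙⁿ, F(ν))` (for `i ≥ 1`) by the local cohomology module
`H^{i+1}_𝔪(M)` at the irrelevant maximal ideal `𝔪 = (X₀,…,Xₙ)`, to which it is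
canonically isomorphic.
-/

open CategoryTheory TensorProduct

noncomputable section

variable (K : Type) [Field K] (n : ℕ)

section W2main
open Limits Abelian
namespace W2


section bridge
variable {R : Type} [CommRing R]

/-- the tower of quotients -/
abbrev XQ (J : Ideal R) (t : ℕ) : ModuleCat.{0} R := ModuleCat.of R (R ⧸ J ^ t)

/-- transition maps -/
abbrev trn (J : Ideal R) {t t' : ℕ} (h : t ≤ t') : XQ J t' ⟶ XQ J t :=
  ModuleCat.ofHom (Submodule.mapQ _ _ LinearMap.id (Ideal.pow_le_pow_right h))

/-- vanishing of the colimit of Ext -/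
def Van (J : Ideal R) (i : ℕ) (M : ModuleCat.{0} R) : Prop :=
  ∀ t : ℕ, ∀ x : Abelian.Ext (XQ J t) M i, ∃ t', ∃ h : t ≤ t',
    (Ext.mk₀ (trn J h)).comp x (zero_add i) = 0

abbrev YF (M : ModuleCat.{0} R) : ModuleCat.{0} R ⥤ (ModuleCat.{0} R)ᵒᵖ :=
  ((linearYoneda R (ModuleCat.{0} R)).obj M).rightOp

instance : Injective (Opposite.op (ModuleCat.of R R)) := by
  have : Projective (ModuleCat.of R R) := ModuleCat.projective_of_free (Module.Basis.singleton Unit R)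
  infer_instance

/-- a cochain as a morphism in the opposite category -/
def cc {M : ModuleCat.{0} R} (P : ChainComplex (ModuleCat.{0} R) ℕ) (n : ℕ) (f : P.X n ⟶ M) :
    (((YF M).mapHomologicalComplex _).obj P).X n ⟶ Opposite.op (ModuleCat.of R R) :=
  Quiver.Hom.op (ModuleCat.ofHom (LinearMap.toSpanSingleton R (P.X n ⟶ M) f))

lemma cc_inj {M : ModuleCat.{0} R} (P : ChainComplex (ModuleCat.{0} R) ℕ) (n : ℕ)
    {k : (((YF M).mapHomologicalComplex _).obj P).X n ⟶ Opposite.op (ModuleCat.of R R)} :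
    k = cc P n (ModuleCat.Hom.hom k.unop (1 : R)) := by
  apply Quiver.Hom.unop_inj
  refine ModuleCat.hom_ext (LinearMap.ext_ring ?_)
  exact (one_smul R (ModuleCat.Hom.hom k.unop (1 : R) : P.X n ⟶ M)).symm

lemma cc_eq {M : ModuleCat.{0} R} (P : ChainComplex (ModuleCat.{0} R) ℕ) (n : ℕ)
    {f g : P.X n ⟶ M} (h : cc P n f = cc P n g) : f = g := by
  have := congrArg (fun z => (ModuleCat.Hom.hom z.unop (1 : R) : P.X n ⟶ M)) h
  have h2 : (1 : R) • f = (1 : R) • g := this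
  simpa using h2

lemma cc_d {M : ModuleCat.{0} R} (P : ChainComplex (ModuleCat.{0} R) ℕ) (i j : ℕ)
    (f : P.X j ⟶ M) : (((YF M).mapHomologicalComplex _).obj P).d i j ≫ cc P j f =
      cc P i (P.d i j ≫ f) := by
  apply Quiver.Hom.unop_inj
  refine ModuleCat.hom_ext (LinearMap.ext_ring ?_)
  change P.d i j ≫ ((1 : R) • f) = (1 : R) • (P.d i j ≫ f)
  simp

lemma cc_map {M : ModuleCat.{0} R} (P P' : ChainComplex (ModuleCat.{0} R) ℕ) (φ : P' ⟶ P) (j : ℕ)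
    (f : P.X j ⟶ M) : (((YF M).mapHomologicalComplex _).map φ).f j ≫ cc P j f =
      cc P' j (φ.f j ≫ f) := by
  apply Quiver.Hom.unop_inj
  refine ModuleCat.hom_ext (LinearMap.ext_ring ?_)
  change φ.f j ≫ ((1 : R) • f) = (1 : R) • (φ.f j ≫ f)
  simp

lemma cc_zero {M : ModuleCat.{0} R} (P : ChainComplex (ModuleCat.{0} R) ℕ) (n : ℕ) :
    cc P n (0 : P.X n ⟶ M) = 0 := by
  apply Quiver.Hom.unop_inj
  refine ModuleCat.hom_ext (LinearMap.ext_ring ?_)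
  change (1 : R) • (0 : P.X n ⟶ M) = 0
  simp

/-- homology class attached to a cocycle -/
def cls {M : ModuleCat.{0} R} (P : ChainComplex (ModuleCat.{0} R) ℕ) (n : ℕ)
    (f : P.X n ⟶ M) (hf : P.d (n+1) n ≫ f = 0) :
    (((YF M).mapHomologicalComplex _).obj P).homology n ⟶ Opposite.op (ModuleCat.of R R) :=
  HomologicalComplex.homologyι _ _ ≫
    HomologicalComplex.descOpcycles _ (cc P n f)
      (n+1) (by simp) (by rw [cc_d, hf, cc_zero])

lemma cls_nat {M : ModuleCat.{0} R} (P P' : ChainComplex (ModuleCat.{0} R) ℕ) (n : ℕ)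
    (φ : P' ⟶ P)
    (f : P.X n ⟶ M) (hf : P.d (n+1) n ≫ f = 0) :
    HomologicalComplex.homologyMap (((YF M).mapHomologicalComplex _).map φ) n ≫ cls P n f hf =
    cls P' n (φ.f n ≫ f) (by rw [← φ.comm_assoc, hf, comp_zero]) := by
  unfold cls
  rw [HomologicalComplex.homologyι_naturality_assoc, HomologicalComplex.opcyclesMap_comp_descOpcycles]
  congr 2

lemma cls_zero {M : ModuleCat.{0} R} (P : ChainComplex (ModuleCat.{0} R) ℕ) (p : ℕ)
    (f : P.X (p+1) ⟶ M) (hf : P.d (p+1+1) (p+1) ≫ f = 0) (h : cls P (p+1) f hf = 0) :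
    ∃ g : P.X p ⟶ M, P.d (p+1) p ≫ g = f := by
  have hex := ShortComplex.exact_of_f_is_kernel (ShortComplex.mk _ _ (HomologicalComplex.homologyι_comp_fromOpcycles
    (((YF M).mapHomologicalComplex _).obj P) (p+1) p)) (HomologicalComplex.homologyIsKernel _ _ _ (by simp))
  obtain ⟨k, hk⟩ : ∃ k : (((YF M).mapHomologicalComplex _).obj P).X p ⟶
      Opposite.op (ModuleCat.of R R),
      (((YF M).mapHomologicalComplex _).obj P).fromOpcycles (p+1) p ≫ k =
      HomologicalComplex.descOpcycles _ (cc P (p+1) f)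
      (p+1+1) (by simp) (by rw [cc_d, hf, cc_zero]) :=
    ⟨hex.descToInjective _ h, hex.comp_descToInjective _ h⟩
  have h3 := congrArg (fun z => HomologicalComplex.pOpcycles _ _ ≫ z) hk
  simp only [HomologicalComplex.p_descOpcycles, HomologicalComplex.p_fromOpcycles_assoc] at h3
  have h4 := cc_inj P p (k := k)
  rw [h4] at h3
  exact ⟨_, cc_eq _ _ ((cc_d _ _ _ _).symm.trans h3)⟩

lemma van_of_subsingleton (J : Ideal R) (i : ℕ) (M : ModuleCat.{0} R)
    (h : Subsingleton ((localCohomology J (i+1)).obj M)) : Van J (i+1) M := by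
  intro t x
  let F := localCohomology.diagram (localCohomology.idealPowersDiagram J) (i+1)
  let G := F ⋙ (evaluation _ _).obj M
  let P : ∀ t, ProjectiveResolution (XQ J t) := fun t => projectiveResolution _
  obtain ⟨f, hf, rfl⟩ := (P t).extMk_surjective x (i+1+1) rfl
  let y0 : (((YF M).leftDerived (i+1)).obj (XQ J t)) ⟶ Opposite.op (ModuleCat.of R R) :=
    ((P t).isoLeftDerivedObj (YF M) (i+1)).hom ≫ cls (P t).complex (i+1) f hf
  let y : G.obj (Opposite.op (Opposite.op t)) := (ModuleCat.Hom.hom y0.unop) (1 : R)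
  have hs : Subsingleton (colimit G : ModuleCat.{0} R) := by
    have e : (colimit F).obj M ≅ colimit G := colimitObjIsoColimitCompEvaluation F M
    have : Subsingleton ((colimit F).obj M : ModuleCat.{0} R) := h
    exact e.toLinearEquiv.symm.toEquiv.subsingleton
  obtain ⟨j', φ, hφ⟩ := Concrete.colimit_rep_eq_zero R G _ y (Subsingleton.elim _ _)
  let t' := j'.unop.unop
  have htt : t ≤ t' := φ.unop.unop.down.down
  refine ⟨t', htt, ?_⟩
  let ψ : ProjectiveResolution.Hom (P t') (P t) (trn J htt) :=
    { hom := ProjectiveResolution.lift (trn J htt) (P t') (P t)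
      hom_f_zero_comp_π_f_zero := by
        rw [ProjectiveResolution.lift_commutes_zero]; simp }
  rw [ProjectiveResolution.mk₀_comp_extMk _ _ _ _ ψ,
    ProjectiveResolution.extMk_eq_zero_iff _ _ _ _ _ i rfl]
  apply cls_zero _ _ _ (by rw [← ψ.hom.comm_assoc, hf, comp_zero])
  rw [← cls_nat _ _ _ _ _ hf]
  have hn : ((YF M).leftDerived (i + 1)).map (trn J htt) ≫ ((P t).isoLeftDerivedObj (YF M) (i + 1)).hom =
      ((P t').isoLeftDerivedObj (YF M) (i + 1)).hom ≫
      HomologicalComplex.homologyMap (((YF M).mapHomologicalComplex _).map ψ.hom) (i+1) :=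
    ProjectiveResolution.isoLeftDerivedObj_hom_naturality (trn J htt) (P t') (P t) ψ.hom
    (ProjectiveResolution.lift_commutes_zero _ _ _) (YF M) (i+1)
  have h0 : ((YF M).leftDerived (i+1)).map (trn J htt) ≫ y0 = 0 := by
    apply Quiver.Hom.unop_inj
    refine ModuleCat.hom_ext (LinearMap.ext_ring ?_)
    exact hφ
  have h1 : ((P t').isoLeftDerivedObj (YF M) (i+1)).hom ≫
      HomologicalComplex.homologyMap (((YF M).mapHomologicalComplex _).map ψ.hom) (i+1) ≫
      cls (P t).complex (i + 1) f hf = 0 :=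
    (Category.assoc _ _ _).symm.trans ((congrArg (· ≫ cls (P t).complex (i + 1) f hf) hn.symm).trans
      ((Category.assoc _ _ _).trans h0))
  exact (cancel_epi ((P t').isoLeftDerivedObj (YF M) (i+1)).hom).1 (h1.trans comp_zero.symm)
end bridge


section vanlem
variable {R : Type} [CommRing R]

lemma trn_comp (J : Ideal R) {t t' t'' : ℕ} (h : t ≤ t') (h' : t' ≤ t'') :
    trn J h' ≫ trn J h = trn J (h.trans h') := by
  ext
  rfl

lemma van_c (J : Ideal R) (i : ℕ) {B C : Type} [AddCommGroup B] [AddCommGroup C] [Module R B]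
    [Module R C] (π : B →ₗ[R] C) (hπ : Function.Surjective π)
    (hB : Van J i (ModuleCat.of R B)) (hA : Van J (i+1) (ModuleCat.of R (LinearMap.ker π))) :
    Van J i (ModuleCat.of R C) := by
  have hS := LinearMap.shortExact_shortComplexKer hπ
  intro t x
  obtain ⟨t1, h1, e1⟩ := hA t (x.comp hS.extClass rfl)
  rw [← Ext.comp_assoc _ _ _ (zero_add i) rfl (by omega)] at e1
  obtain ⟨y, hy⟩ := Ext.covariant_sequence_exact₃ _ hS _ rfl e1
  obtain ⟨t2, h2, e2⟩ := hB t1 y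
  refine ⟨t2, h1.trans h2, ?_⟩
  rw [← trn_comp J h1 h2, ← Ext.mk₀_comp_mk₀_assoc, ← hy, ← Ext.comp_assoc _ _ _ (zero_add i) (add_zero i) (by omega)]
  erw [e2]
  simp

lemma van_b (J : Ideal R) (i : ℕ) {B C : Type} [AddCommGroup B] [AddCommGroup C] [Module R B]
    [Module R C] (π : B →ₗ[R] C) (hπ : Function.Surjective π)
    (hC : Van J i (ModuleCat.of R C)) (hA : Van J i (ModuleCat.of R (LinearMap.ker π))) :
    Van J i (ModuleCat.of R B) := by
  have hS := LinearMap.shortExact_shortComplexKer hπ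
  intro t x
  obtain ⟨t1, h1, e1⟩ := hC t (x.comp (Ext.mk₀ (ModuleCat.ofHom π)) (add_zero i))
  rw [← Ext.comp_assoc _ _ _ (zero_add i) (add_zero i) (by omega)] at e1
  obtain ⟨y, hy⟩ := Ext.covariant_sequence_exact₂ _ hS _ e1
  obtain ⟨t2, h2, e2⟩ := hA t1 y
  refine ⟨t2, h1.trans h2, ?_⟩
  rw [← trn_comp J h1 h2, ← Ext.mk₀_comp_mk₀_assoc, ← hy, ← Ext.comp_assoc _ _ _ (zero_add i) (add_zero i) (by omega)]
  erw [e2]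
  simp

lemma van_equiv (J : Ideal R) (i : ℕ) {B C : Type} [AddCommGroup B] [AddCommGroup C] [Module R B]
    [Module R C] (e : B ≃ₗ[R] C) (hB : Van J i (ModuleCat.of R B)) :
    Van J i (ModuleCat.of R C) := by
  intro t x
  obtain ⟨t1, h1, e1⟩ := hB t (x.comp (Ext.mk₀ (ModuleCat.ofHom e.symm.toLinearMap)) (add_zero i))
  refine ⟨t1, h1, ?_⟩
  have : x = (x.comp (Ext.mk₀ (ModuleCat.ofHom e.symm.toLinearMap)) (add_zero i)).comp
      (Ext.mk₀ (ModuleCat.ofHom e.toLinearMap)) (add_zero i) := by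
    rw [Ext.comp_assoc _ _ _ (add_zero i) (add_zero 0) (by omega), Ext.mk₀_comp_mk₀]
    have h2 : ModuleCat.ofHom e.symm.toLinearMap ≫ ModuleCat.ofHom e.toLinearMap = 𝟙 _ := by
      ext x; simp
    rw [h2]; simp
  rw [this, ← Ext.comp_assoc _ _ _ (zero_add i) (add_zero i) (by omega), e1]
  simp

/-- morphism of kernel sequences -/
def kmap {B C B' C' : Type} [AddCommGroup B] [AddCommGroup C] [Module R B]
    [Module R C] [AddCommGroup B'] [AddCommGroup C'] [Module R B'] [Module R C']
    (π : B →ₗ[R] C) (π' : B' →ₗ[R] C') (β : B →ₗ[R] B') (γ : C →ₗ[R] C')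
    (h : γ ∘ₗ π = π' ∘ₗ β) : π.shortComplexKer ⟶ π'.shortComplexKer where
  τ₁ := ModuleCat.ofHom (β.restrict (fun x hx => by
    have := LinearMap.congr_fun h x
    simp only [LinearMap.comp_apply, LinearMap.mem_ker] at *
    rw [← this, hx, map_zero]))
  τ₂ := ModuleCat.ofHom β
  τ₃ := ModuleCat.ofHom γ
  comm₁₂ := by ext x; rfl
  comm₂₃ := by rw [← ModuleCat.ofHom_comp, ← ModuleCat.ofHom_comp, h]

/-- torsion: degree `i` classes die on deep submodules -/
lemma deep [IsNoetherianRing R] (J : Ideal R) (c : ℕ) (T : Type) [AddCommGroup T] [Module R T]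
    (hT : ∀ a ∈ J ^ c, ∀ x : T, a • x = 0) (i : ℕ) : ∀ (X : Type) [AddCommGroup X] [Module R X]
    [Module.Finite R X] (x : Ext (ModuleCat.of R X) (ModuleCat.of R T) i),
    ∃ s : ℕ, ∀ (Z : Type) [AddCommGroup Z] [Module R Z] (f : Z →ₗ[R] X),
      (∀ z, f z ∈ (J ^ s • ⊤ : Submodule R X)) →
      (Ext.mk₀ (ModuleCat.ofHom f)).comp x (zero_add i) = 0 := by
  induction i with
  | zero =>
    intro X _ _ _ x
    obtain ⟨φ, rfl⟩ := Ext.addEquiv₀.symm.surjective x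
    refine ⟨c, fun Z _ _ f hf => ?_⟩
    have : ModuleCat.ofHom f ≫ φ = 0 := by
      ext z
      have h1 : φ.hom (f z) ∈ Submodule.map φ.hom (J ^ c • ⊤ : Submodule R X) :=
        Submodule.mem_map_of_mem (hf z)
      rw [Submodule.map_smul''] at h1
      have h2 : (J ^ c • Submodule.map φ.hom ⊤ : Submodule R T) ≤ ⊥ := by
        rw [Submodule.smul_le]
        intro r hr n _
        simpa using hT r hr n
      exact h2 h1
    simp [this]
  | succ i ih =>
    intro X _ _ _ x
    obtain ⟨k0, π, hπ⟩ := Module.Finite.exists_fin' R X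
    have hS := LinearMap.shortExact_shortComplexKer hπ
    have : Projective (ModuleCat.of R (Fin k0 → R)) :=
      ModuleCat.projective_of_free (Pi.basisFun R (Fin k0))
    obtain ⟨y, hy⟩ := Ext.contravariant_sequence_exact₃ hS _ x (Ext.eq_zero_of_projective _)
      (n₀ := i) (by omega)
    obtain ⟨s0, hs0⟩ := ih (LinearMap.ker π) y
    obtain ⟨k, hk⟩ := Ideal.exists_pow_inf_eq_pow_smul J (LinearMap.ker π)
    refine ⟨s0 + k, fun Z _ _ f hf => ?_⟩
    let B' : Submodule R (Fin k0 → R) := J ^ (s0 + k) • ⊤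
    let C' : Submodule R X := J ^ (s0 + k) • ⊤
    have hBC : ∀ b ∈ B', π b ∈ C' := by
      intro b hb
      have := Submodule.mem_map_of_mem (f := π) hb
      rw [Submodule.map_smul''] at this
      exact Submodule.smul_mono le_rfl le_top this
    let π' : B' →ₗ[R] C' := π.restrict hBC
    have hπ' : Function.Surjective π' := by
      rintro ⟨c, hc⟩
      have : c ∈ Submodule.map π B' := by
        rw [Submodule.map_smul'', Submodule.map_top, LinearMap.range_eq_top.2 hπ]
        exact hc
      obtain ⟨b, hb, rfl⟩ := this
      exact ⟨⟨b, hb⟩, rfl⟩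
    have hS' := LinearMap.shortExact_shortComplexKer hπ'
    let κ := kmap π' π B'.subtype C'.subtype rfl
    have nat := ShortComplex.ShortExact.extClass_naturality hS' hS κ
    let f' : Z →ₗ[R] C' := f.codRestrict C' hf
    have hff : ModuleCat.ofHom f = ModuleCat.ofHom f' ≫ κ.τ₃ := rfl
    have hz : (Ext.mk₀ κ.τ₁).comp y (zero_add i) = 0 := by
      refine hs0 _ _ ?_
      rintro ⟨⟨b, hb⟩, hbk⟩
      have h1 : b ∈ J ^ (s0 + k) • ⊤ ⊓ LinearMap.ker π := by
        refine ⟨hb, ?_⟩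
        have : π' ⟨b, hb⟩ = 0 := hbk
        exact congrArg Subtype.val this
      rw [hk _ (by omega), Nat.add_sub_cancel] at h1
      have h2 : b ∈ J ^ s0 • (LinearMap.ker π) := Submodule.smul_mono le_rfl inf_le_right h1
      have h3 : Submodule.map (LinearMap.ker π).subtype (J ^ s0 • ⊤) = J ^ s0 • LinearMap.ker π := by
        rw [Submodule.map_smul'']; simp
      rw [← h3] at h2
      obtain ⟨w, hw, rfl⟩ := h2
      exact hw
    rw [hff, ← Ext.mk₀_comp_mk₀_assoc, ← hy,
      ← Ext.comp_assoc (Ext.mk₀ κ.τ₃) _ _ (zero_add 1) (by omega) (by omega)]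
    erw [← nat]
    rw [Ext.comp_assoc _ _ _ (add_zero 1) (zero_add i) (by omega), hz]
    simp

lemma van_torsion [IsNoetherianRing R] (J : Ideal R) (c : ℕ) (T : Type) [AddCommGroup T]
    [Module R T] (hT : ∀ a ∈ J ^ c, ∀ x : T, a • x = 0) (i : ℕ) :
    Van J (i+1) (ModuleCat.of R T) := by
  intro t x
  let π : ∀ t, R →ₗ[R] (R ⧸ J ^ t) := fun t => Submodule.mkQ (J ^ t)
  have hπ : ∀ t, Function.Surjective (π t) := fun t => Submodule.mkQ_surjective _
  have hS := fun t => LinearMap.shortExact_shortComplexKer (hπ t)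
  have : Projective (ModuleCat.of R R) :=
    ModuleCat.projective_of_free (Module.Basis.singleton Unit R)
  obtain ⟨y, hy⟩ := Ext.contravariant_sequence_exact₃ (hS t) _ x (Ext.eq_zero_of_projective _)
      (n₀ := i) (by omega)
  obtain ⟨s, hs⟩ := deep J c T hT i (LinearMap.ker (π t)) y
  refine ⟨t + s, by omega, ?_⟩
  have htt : t ≤ t + s := by omega
  let κ := kmap (π (t+s)) (π t) LinearMap.id
    (Submodule.mapQ _ _ LinearMap.id (Ideal.pow_le_pow_right htt)) rfl
  have nat := ShortComplex.ShortExact.extClass_naturality (hS (t+s)) (hS t) κ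
  have hz : (Ext.mk₀ κ.τ₁).comp y (zero_add i) = 0 := by
    refine hs _ _ ?_
    rintro ⟨b, hb⟩
    have hk : ∀ t, LinearMap.ker (π t) = J ^ t := fun t => Submodule.ker_mkQ _
    have hb' : b ∈ J ^ s • LinearMap.ker (π t) := by
      rw [hk] at hb ⊢
      rw [smul_eq_mul, ← pow_add, add_comm]
      exact hb
    have h3 : Submodule.map (LinearMap.ker (π t)).subtype (J ^ s • ⊤) = J ^ s • LinearMap.ker (π t) := by
      rw [Submodule.map_smul'']; simp
    rw [← h3] at hb'
    obtain ⟨w, hw, rfl⟩ := hb'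
    exact hw
  have h3 : trn J htt = κ.τ₃ := rfl
  rw [h3, ← hy, ← Ext.comp_assoc (Ext.mk₀ κ.τ₃) _ _ (zero_add 1) (by omega) (by omega)]
  erw [← nat]
  rw [Ext.comp_assoc _ _ _ (add_zero 1) (zero_add i) (by omega), hz]
  simp

lemma van_free (J : Ideal R) (i : ℕ) (h : ∀ t, Subsingleton (Ext (XQ J t) (ModuleCat.of R R) i))
    (F : Type) [AddCommGroup F] [Module R F] [Module.Free R F] [Module.Finite R F] :
    Van J i (ModuleCat.of R F) := by
  intro t x
  refine ⟨t, le_rfl, ?_⟩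
  let b := Module.Free.chooseBasis R F
  have hid : 𝟙 (ModuleCat.of R F) = ∑ j, ModuleCat.ofHom (b.coord j) ≫
      ModuleCat.ofHom (LinearMap.toSpanSingleton R F (b j)) := by
    ext v
    simp [ModuleCat.hom_sum]
  have : x = 0 := by
    rw [← Ext.comp_mk₀_id x, hid, Ext.mk₀_sum, Ext.comp_sum]
    refine Finset.sum_eq_zero fun j _ => ?_
    rw [← Ext.mk₀_comp_mk₀, ← Ext.comp_assoc _ _ _ (add_zero i) (add_zero 0) (by omega),
      Subsingleton.elim (x.comp (Ext.mk₀ (ModuleCat.ofHom (b.coord j))) (add_zero i)) 0]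
    simp
  rw [this]; simp

/-- degree zero -/
lemma van_zero (J : Ideal R) (C : Type) [AddCommGroup C] [Module R C]
    (h : Van J 0 (ModuleCat.of R C)) (c : ℕ) (v : C) (hv : ∀ a ∈ J ^ c, a • v = 0) : v = 0 := by
  let φ : (R ⧸ J ^ c) →ₗ[R] C := Submodule.liftQ _ (LinearMap.toSpanSingleton R C v)
    (fun a ha => by simpa using hv a ha)
  obtain ⟨t', h', e⟩ := h c (Ext.mk₀ (ModuleCat.ofHom φ))
  rw [Ext.mk₀_comp_mk₀, Ext.mk₀_eq_zero_iff] at e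
  have := congrArg (fun z => ModuleCat.Hom.hom z (Submodule.mkQ (J ^ t') (1 : R))) e
  have h2 : (1 : R) • v = 0 := this
  simpa using h2
end vanlem


section depth
open MvPolynomial

lemma X_mul_mem {K : Type} [Field K] {σ : Type} (s : Set σ) (j : σ) (hj : j ∉ s)
    (p : MvPolynomial σ K) (h : X j * p ∈ Ideal.span (X '' s : Set (MvPolynomial σ K))) :
    p ∈ Ideal.span (X '' s : Set (MvPolynomial σ K)) := by
  classical
  rw [mem_ideal_span_X_image] at h ⊢
  intro m hm
  obtain ⟨i, his, hi⟩ := h (Finsupp.single j 1 + m) (by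
    rw [mem_support_iff, coeff_X_mul]
    exact mem_support_iff.1 hm)
  refine ⟨i, his, ?_⟩
  have hij : j ≠ i := by rintro rfl; exact hj his
  simpa [Finsupp.single_apply, hij] using hi

lemma ofList_X {K : Type} [Field K] {σ : Type} (l : List σ) :
    Ideal.ofList (l.map (X : σ → MvPolynomial σ K)) = Ideal.span (X '' {i | i ∈ l}) := by
  unfold Ideal.ofList
  congr 1
  ext p
  simp

lemma weaklyRegular_X {K : Type} [Field K] {σ : Type} (l : List σ) (hl : l.Nodup) :
    RingTheory.Sequence.IsWeaklyRegular (MvPolynomial σ K)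
      (l.map (X : σ → MvPolynomial σ K)) := by
  constructor
  intro i h
  have hi : i < l.length := by simpa using h
  rw [← List.map_take, ofList_X, isSMulRegular_iff_right_eq_zero_of_smul]
  intro x hx
  obtain ⟨p, rfl⟩ := Submodule.mkQ_surjective _ x
  rw [← map_smul] at hx
  simp only [Submodule.mkQ_apply, Submodule.Quotient.mk_eq_zero, List.getElem_map, smul_eq_mul,
    Ideal.mul_top] at hx ⊢
  refine X_mul_mem _ _ ?_ _ hx
  intro hmem
  rw [Set.mem_ofPred_eq, List.mem_take_iff_getElem] at hmem
  obtain ⟨k, hk, e⟩ := hmem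
  have := (List.Nodup.getElem_inj_iff hl).1 e
  omega

lemma span_X_ne_top {K : Type} [Field K] {σ : Type} (s : Set σ) :
    Ideal.span (X '' s : Set (MvPolynomial σ K)) ≠ ⊤ := by
  rw [Ne, Ideal.eq_top_iff_one, mem_ideal_span_X_image]
  intro h
  obtain ⟨i, _, hi⟩ := h 0 (by simp)
  exact hi rfl

lemma ext_van {K : Type} [Field K] (n : ℕ) (hn : 3 ≤ n) (i : ℕ) (hi : i < 3)
    (J : Ideal (MvPolynomial (Fin (n+1)) K)) (hJ : J = Ideal.span (Set.range X)) (t : ℕ) :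
    Subsingleton (Ext (XQ J t) (ModuleCat.of (MvPolynomial (Fin (n+1)) K)
      (MvPolynomial (Fin (n+1)) K)) i) := by
  let l : List (Fin (n+1)) := [⟨0, by omega⟩, ⟨1, by omega⟩, ⟨2, by omega⟩]
  have hJ' : J = Ideal.span (X '' Set.univ) := by rw [hJ, Set.image_univ]
  refine ModuleCat.subsingleton_ext_of_exists_isRegular J _ ?_ _ ?_ (l.map X) ?_ ⟨?_, ?_⟩ i
    (by simpa [l] using hi)
  · rw [Module.support_eq_zeroLocus, PrimeSpectrum.zeroLocus_subset_zeroLocus_iff]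
    have : Module.annihilator (MvPolynomial (Fin (n+1)) K) (MvPolynomial (Fin (n+1)) K ⧸ J ^ t) = J ^ t :=
      Ideal.annihilator_quotient
    intro a ha
    refine ⟨t, ?_⟩
    erw [this]
    exact Ideal.pow_mem_pow ha t
  · change J • (⊤ : Ideal (MvPolynomial (Fin (n+1)) K)) < ⊤
    rw [smul_eq_mul, Ideal.mul_top, hJ']
    exact lt_top_iff_ne_top.2 (span_X_ne_top _)
  · intro r hr
    rw [hJ]
    obtain ⟨j, _, rfl⟩ := List.mem_map.1 hr
    exact Ideal.subset_span ⟨j, rfl⟩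
  · exact weaklyRegular_X l (by simp [l])
  · rw [ofList_X]
    change (⊤ : Ideal (MvPolynomial (Fin (n+1)) K)) ≠ _ • (⊤ : Ideal (MvPolynomial (Fin (n+1)) K))
    rw [smul_eq_mul, Ideal.mul_top]
    exact (span_X_ne_top _).symm

end depth


section koszul
variable {R : Type} [CommRing R]

section alt
variable {L M : Type} [AddCommGroup L] [Module R L] [AddCommGroup M] [Module R M]

/-- alternating map from an alternating bilinear map -/
def alt2 (B : L →ₗ[R] L →ₗ[R] M) (hB : ∀ x, B x x = 0) : L [⋀^Fin 2]→ₗ[R] M where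
  toFun v := B (v 0) (v 1)
  map_update_add' := by
    intro _ v i x y
    fin_cases i <;> simp
  map_update_smul' := by
    intro _ v i c x
    fin_cases i <;> simp
  map_eq_zero_of_eq' := by
    intro v i j h hij
    have : v 0 = v 1 := by
      fin_cases i <;> fin_cases j <;> simp_all
    change B (v 0) (v 1) = 0
    rw [this, hB]

/-- the wedge as a bilinear map -/
def wd : L →ₗ[R] L →ₗ[R] ⋀[R]^2 L :=
  LinearMap.mk₂ R (fun x y => exteriorPower.ιMulti R 2 ![x, y])
    (fun x x' y => by
      have := (exteriorPower.ιMulti R 2 (M := L)).map_update_add ![x, y] 0 x x'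
      have h : ∀ z, Function.update ![x, y] 0 z = ![z, y] := fun z => by
        ext i; fin_cases i <;> simp
      simp only [h] at this
      exact this)
    (fun c x y => by
      have := (exteriorPower.ιMulti R 2 (M := L)).map_update_smul ![x, y] 0 c x
      have h : ∀ z, Function.update ![x, y] 0 z = ![z, y] := fun z => by
        ext i; fin_cases i <;> simp
      simp only [h] at this
      exact this)
    (fun x y y' => by
      have := (exteriorPower.ιMulti R 2 (M := L)).map_update_add ![x, y] 1 y y'
      have h : ∀ z, Function.update ![x, y] 1 z = ![x, z] := fun z => by
        ext i; fin_cases i <;> simp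
      simp only [h] at this
      exact this)
    (fun c x y => by
      have := (exteriorPower.ιMulti R 2 (M := L)).map_update_smul ![x, y] 1 c y
      have h : ∀ z, Function.update ![x, y] 1 z = ![x, z] := fun z => by
        ext i; fin_cases i <;> simp
      simp only [h] at this
      exact this)

lemma wd_self (x : L) : wd (R := R) x x = 0 :=
  (exteriorPower.ιMulti R 2 (M := L)).map_eq_zero_of_eq ![x, x] (i := 0) (j := 1) rfl (by simp)

lemma wd_swap (x y : L) : wd (R := R) y x = - wd x y := by
  have h := wd_self (R := R) (x + y)
  simp only [map_add, LinearMap.add_apply, wd_self, zero_add, add_zero] at h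
  exact eq_neg_of_add_eq_zero_left (by rw [add_comm] at h; rw [add_comm]; exact h)

lemma wd_ext {f g : ⋀[R]^2 L →ₗ[R] M} (h : ∀ x y, f (wd x y) = g (wd x y)) : f = g := by
  apply exteriorPower.linearMap_ext
  ext v
  have : v = ![v 0, v 1] := by ext i; fin_cases i <;> rfl
  rw [this]
  exact h (v 0) (v 1)

/-- linear map from the second exterior power -/
def wl (B : L →ₗ[R] L →ₗ[R] M) (hB : ∀ x, B x x = 0) : ⋀[R]^2 L →ₗ[R] M :=
  exteriorPower.alternatingMapLinearEquiv (alt2 B hB)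

lemma wl_wd (B : L →ₗ[R] L →ₗ[R] M) (hB : ∀ x, B x x = 0) (x y : L) :
    wl B hB (wd x y) = B x y :=
  exteriorPower.alternatingMapLinearEquiv_apply_ιMulti _ _

lemma map_wd (f : L →ₗ[R] M) (x y : L) :
    exteriorPower.map 2 f (wd (R := R) x y) = wd (f x) (f y) := by
  refine (exteriorPower.map_apply_ιMulti f _).trans ?_
  change _ = exteriorPower.ιMulti R 2 ![f x, f y]
  congr 1
  ext i; fin_cases i <;> rfl

/-- antisymmetrization -/
def asym : ⋀[R]^2 L →ₗ[R] L ⊗[R] L :=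
  wl (TensorProduct.mk R L L - (TensorProduct.mk R L L).flip) (by intro x; simp)

lemma asym_wd (x y : L) : asym (R := R) (wd x y) = x ⊗ₜ y - y ⊗ₜ x := by
  simp [asym, wl_wd]

end alt

variable {L1 L0 : Type} [AddCommGroup L1] [Module R L1] [AddCommGroup L0] [Module R L0]
  (d : L1 →ₗ[R] L0) {r : ℕ} (b : Module.Basis (Fin r) R L0)

/-- Koszul map -/
def ka : ⋀[R]^2 L1 →ₗ[R] L1 ⊗[R] L0 :=
  wl ((TensorProduct.mk R L1 L0).compl₂ d - ((TensorProduct.mk R L1 L0).compl₂ d).flip)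
    (by intro x; simp)

lemma ka_wd (x y : L1) : ka d (wd x y) = x ⊗ₜ d y - y ⊗ₜ d x := by
  simp [ka, wl_wd]

/-- linear maps out of the square of a based module -/
def bb {M : Type} [AddCommGroup M] [Module R M] (w : Fin r → Fin r → M) : L0 ⊗[R] L0 →ₗ[R] M :=
  TensorProduct.lift (b.constr R fun i => b.constr R fun j => w i j)

lemma bb_apply {M : Type} [AddCommGroup M] [Module R M] (w : Fin r → Fin r → M) (i j : Fin r) :
    bb b w (b i ⊗ₜ b j) = w i j := by
  simp [bb]

lemma bb_ext {r : ℕ} (b : Module.Basis (Fin r) R L0) {M : Type} [AddCommGroup M] [Module R M] {f g : L0 ⊗[R] L0 →ₗ[R] M}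
    (h : ∀ i j, f (b i ⊗ₜ b j) = g (b i ⊗ₜ b j)) : f = g := by
  apply TensorProduct.ext
  exact b.ext fun i => b.ext fun j => h i j

def mu : L0 ⊗[R] L0 →ₗ[R] L0 ⊗[R] L0 := bb b fun i j => b (min i j) ⊗ₜ b (max i j)
def tau : L0 ⊗[R] L0 →ₗ[R] ⋀[R]^2 L0 := bb b fun i j => if i < j then wd (b i) (b j) else 0
def tau' : L0 ⊗[R] L0 →ₗ[R] ⋀[R]^2 L0 := bb b fun i j => if j < i then wd (b i) (b j) else 0

lemma mu_comm (q : L0 ⊗[R] L0) : mu b (TensorProduct.comm R L0 L0 q) = mu b q := by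
  have : mu b ∘ₗ (TensorProduct.comm R L0 L0).toLinearMap = mu b := by
    apply bb_ext b
    intro i j
    simp [mu, bb_apply, min_comm, max_comm]
  exact LinearMap.congr_fun this q

lemma mu_asym (w : ⋀[R]^2 L0) : mu b (asym w) = 0 := by
  have : mu b ∘ₗ asym = 0 := by
    apply wd_ext
    intro x y
    have := mu_comm b (x ⊗ₜ y)
    simp only [TensorProduct.comm_tmul] at this
    simp [asym_wd, this]
  exact LinearMap.congr_fun this w

lemma tau_asym (w : ⋀[R]^2 L0) : tau b (asym w) = w := by
  have : tau b ∘ₗ asym = LinearMap.id := by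
    apply wd_ext
    intro x y
    have h : (wd (R := R) (L := L0)).compr₂ (tau b ∘ₗ asym) = wd := by
      refine b.ext fun i => b.ext fun j => ?_
      simp only [LinearMap.compr₂_apply, LinearMap.comp_apply, asym_wd, map_sub, tau, bb_apply]
      rcases lt_trichotomy i j with h | h | h
      · simp [h, h.not_gt]
      · subst h; simp [wd_self]
      · simp [h, h.not_gt, wd_swap (b i) (b j)]
    exact LinearMap.congr_fun (LinearMap.congr_fun h x) y
  exact LinearMap.congr_fun this w

lemma asym_tau' (q : L0 ⊗[R] L0) : asym (tau' b q) = q - mu b q := by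
  have : asym ∘ₗ tau' b = LinearMap.id - mu b := by
    apply bb_ext b
    intro i j
    simp only [LinearMap.comp_apply, tau', mu, bb_apply, LinearMap.sub_apply, LinearMap.id_apply]
    rcases lt_or_ge j i with h | h
    · simp [h, h.le, asym_wd]
    · simp [h, h.not_gt]
  exact LinearMap.congr_fun this q

/-- second Koszul map -/
def kb : L1 ⊗[R] L0 →ₗ[R] L0 ⊗[R] L0 := mu b ∘ₗ LinearMap.rTensor L0 d

lemma T_ka (z : ⋀[R]^2 L1) : LinearMap.rTensor L0 d (ka d z) = asym (exteriorPower.map 2 d z) := by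
  have : LinearMap.rTensor L0 d ∘ₗ ka d = asym ∘ₗ exteriorPower.map 2 d := by
    apply wd_ext
    intro x y
    simp [ka_wd, map_wd, asym_wd]
  exact LinearMap.congr_fun this z

lemma kb_ka (z : ⋀[R]^2 L1) : kb d b (ka d z) = 0 := by
  simp [kb, T_ka, mu_asym]

lemma ka_map (z : ⋀[R]^2 (LinearMap.ker d)) :
    ka d (exteriorPower.map 2 (LinearMap.ker d).subtype z) = 0 := by
  have : ka d ∘ₗ exteriorPower.map 2 (LinearMap.ker d).subtype = 0 := by
    apply wd_ext
    intro x y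
    simp [map_wd, ka_wd]
  exact LinearMap.congr_fun this z

variable (s : L0 →ₗ[R] L1) (f : R) (hs : ∀ x, d (s x) = f • x)

/-- projection to the kernel -/
def pp : L1 →ₗ[R] LinearMap.ker d :=
  (f • LinearMap.id - s ∘ₗ d).codRestrict _ (by intro x; simp [hs])

lemma pp_val (x : L1) : (pp d s f hs x : L1) = f • x - s (d x) := rfl

lemma map_pp (u : ⋀[R]^2 (LinearMap.ker d)) :
    exteriorPower.map 2 (pp d s f hs) (exteriorPower.map 2 (LinearMap.ker d).subtype u)
      = (f * f) • u := by
  have : exteriorPower.map 2 (pp d s f hs) ∘ₗ exteriorPower.map 2 (LinearMap.ker d).subtype =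
      (f * f) • LinearMap.id := by
    apply wd_ext
    intro x y
    have h : ∀ x : LinearMap.ker d, pp d s f hs x = f • x := by
      intro x
      ext
      simp [pp_val]
    simp [map_wd, h, smul_smul]
  exact LinearMap.congr_fun this u

/-- homotopy -/
def h0 : L1 ⊗[R] L0 →ₗ[R] ⋀[R]^2 L1 := TensorProduct.lift (wd.compl₂ s)

lemma homotopy1 (z : ⋀[R]^2 L1) : (f * f) • z -
      exteriorPower.map 2 (LinearMap.ker d).subtype (exteriorPower.map 2 (pp d s f hs) z) =
    f • h0 s (ka d z) - exteriorPower.map 2 s (tau b (LinearMap.rTensor L0 d (ka d z))) := by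
  have : (f * f) • LinearMap.id -
      exteriorPower.map 2 (LinearMap.ker d).subtype ∘ₗ (exteriorPower.map 2 (pp d s f hs)) =
    f • (h0 s ∘ₗ ka d) - exteriorPower.map 2 s ∘ₗ exteriorPower.map 2 d := by
    apply wd_ext
    intro x y
    simp only [LinearMap.sub_apply, LinearMap.smul_apply, LinearMap.comp_apply, LinearMap.id_apply,
      map_wd, ka_wd, map_sub, h0, TensorProduct.lift.tmul, LinearMap.compl₂_apply,
      Submodule.subtype_apply, pp_val, map_smul]
    rw [wd_swap (s (d x)) y]
    simp only [smul_sub, smul_smul, smul_neg]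
    abel
  have h2 := LinearMap.congr_fun this z
  rw [T_ka, tau_asym]
  exact h2

lemma homotopy2 (hs : ∀ x, d (s x) = f • x) (q : L1 ⊗[R] L0) (hq : kb d b q = 0) : ∃ z, ka d z = (f * f) • q := by
  have e1 : ka d ∘ₗ h0 s = f • LinearMap.id - LinearMap.rTensor L0 s ∘ₗ
      (TensorProduct.comm R L0 L0).toLinearMap ∘ₗ LinearMap.rTensor L0 d := by
    apply TensorProduct.ext'
    intro x l
    simp [h0, ka_wd, hs]
  have e2 : ka d ∘ₗ exteriorPower.map 2 s = f • (LinearMap.rTensor L0 s ∘ₗ asym) := by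
    apply wd_ext
    intro x y
    simp [ka_wd, map_wd, asym_wd, hs, smul_sub]
  have e3 : ∀ w : ⋀[R]^2 L0, TensorProduct.comm R L0 L0 (asym w) = - asym w := by
    intro w
    have : (TensorProduct.comm R L0 L0).toLinearMap ∘ₗ asym = - asym := by
      apply wd_ext
      intro x y
      simp [asym_wd]
    exact LinearMap.congr_fun this w
  have e4 := asym_tau' b (LinearMap.rTensor L0 d q)
  have hq' : mu b (LinearMap.rTensor L0 d q) = 0 := hq
  rw [hq', sub_zero] at e4
  refine ⟨f • h0 s q - exteriorPower.map 2 s (tau' b (LinearMap.rTensor L0 d q)), ?_⟩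
  have e1' := LinearMap.congr_fun e1 q
  have e2' := LinearMap.congr_fun e2 (tau' b (LinearMap.rTensor L0 d q))
  simp only [LinearMap.comp_apply, LinearMap.sub_apply, LinearMap.smul_apply, LinearMap.id_apply,
    LinearEquiv.coe_coe] at e1' e2'
  rw [← e4, e3] at e1'
  rw [map_sub, map_smul, e1', e2', e4]
  rw [map_neg, sub_neg_eq_add, smul_add, add_sub_cancel_right, smul_smul]

end koszul

section final
variable {R : Type} [CommRing R]

lemma van_push (J : Ideal R) (i : ℕ) {A Z : Type} [AddCommGroup A] [AddCommGroup Z] [Module R A]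
    [Module R Z] (k : A →ₗ[R] Z) (hA : Van J i (ModuleCat.of R A))
    (hK : Van J (i+1) (ModuleCat.of R (LinearMap.ker k))) :
    Van J i (ModuleCat.of R (LinearMap.range k)) := by
  refine van_c J i k.rangeRestrict k.surjective_rangeRestrict hA ?_
  exact van_equiv J (i+1) (LinearEquiv.ofEq _ _ (LinearMap.ker_rangeRestrict k).symm) hK

lemma van_ext (J : Ideal R) (i : ℕ) {A Z : Type} [AddCommGroup A] [AddCommGroup Z] [Module R A]
    [Module R Z] (k : A →ₗ[R] Z) (hA : Van J i (ModuleCat.of R A))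
    (hK : Van J (i+1) (ModuleCat.of R (LinearMap.ker k)))
    (hQ : Van J i (ModuleCat.of R (Z ⧸ LinearMap.range k))) :
    Van J i (ModuleCat.of R Z) := by
  refine van_b J i (LinearMap.range k).mkQ (Submodule.mkQ_surjective _) hQ ?_
  exact van_equiv J i (LinearEquiv.ofEq _ _ (Submodule.ker_mkQ _).symm) (van_push J i k hA hK)

lemma van_tors [IsNoetherianRing R] (J : Ideal R) (c : ℕ) (T : Type) [AddCommGroup T]
    [Module R T] (hT : ∀ f ∈ J ^ c, ∀ x : T, (f * f) • x = 0) (i : ℕ) :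
    Van J (i+1) (ModuleCat.of R T) := by
  have h1 : J ^ c ≤ (Module.annihilator R T).radical := by
    intro f hf
    refine ⟨2, ?_⟩
    rw [Module.mem_annihilator]
    intro x
    rw [pow_two]
    exact hT f hf x
  obtain ⟨k, hk⟩ := Ideal.exists_pow_le_of_le_radical_of_fg h1 (IsNoetherian.noetherian _)
  refine van_torsion J (c * k) T (fun a ha x => ?_) i
  rw [pow_mul] at ha
  exact Module.mem_annihilator.1 (hk ha) x

theorem core [IsNoetherianRing R] (J : Ideal R) (hJ : J ≠ ⊤) (c : ℕ)
    (hR : ∀ i < 3, ∀ t, Subsingleton (Ext (XQ J t) (ModuleCat.of R R) i))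
    {L1 L0 : Type} [AddCommGroup L1] [Module R L1] [AddCommGroup L0] [Module R L0]
    [Module.Free R L1] [Module.Finite R L1] [Module.Free R L0] [Module.Finite R L0]
    (d : L1 →ₗ[R] L0) {r : ℕ} (b : Module.Basis (Fin r) R L0) (i0 : Fin r)
    (hd : ∀ f ∈ J ^ c, ∃ s : L0 →ₗ[R] L1, ∀ x, d (s x) = f • x)
    (hmin : ∀ x, d x ∈ (J • ⊤ : Submodule R L0))
    (hv : Van J 3 (ModuleCat.of R (⋀[R]^2 (LinearMap.ker d)))) : False := by
  have hZ : Van J 3 (ModuleCat.of R (LinearMap.ker (ka d))) := by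
    let k : ⋀[R]^2 (LinearMap.ker d) →ₗ[R] LinearMap.ker (ka d) :=
      (exteriorPower.map 2 (LinearMap.ker d).subtype).codRestrict _ (fun z => ka_map d z)
    refine van_ext J 3 k hv ?_ ?_
    · refine van_tors J c _ ?_ 3
      rintro f hf ⟨u, hu⟩
      obtain ⟨s, hs⟩ := hd f hf
      have h1 := map_pp d s f hs u
      have h2 : exteriorPower.map 2 (LinearMap.ker d).subtype u = 0 := congrArg Subtype.val hu
      rw [h2, map_zero] at h1
      exact Subtype.ext h1.symm
    · refine van_tors J c _ ?_ 2
      intro f hf x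
      obtain ⟨⟨z, hz⟩, rfl⟩ := Submodule.mkQ_surjective _ x
      obtain ⟨s, hs⟩ := hd f hf
      have h1 := homotopy1 d b s f hs z
      rw [LinearMap.mem_ker.1 hz] at h1
      simp only [map_zero, smul_zero, sub_zero] at h1
      rw [← map_smul, Submodule.mkQ_apply, Submodule.Quotient.mk_eq_zero]
      exact ⟨exteriorPower.map 2 (pp d s f hs) z, Subtype.ext (sub_eq_zero.1 h1).symm⟩
  have hQ : Van J 2 (ModuleCat.of R (LinearMap.ker (kb d b))) := by
    let k : ⋀[R]^2 L1 →ₗ[R] LinearMap.ker (kb d b) :=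
      (ka d).codRestrict _ (fun z => kb_ka d b z)
    refine van_ext J 2 k (van_free J 2 (hR 2 (by omega)) _) ?_ ?_
    · exact van_equiv J 3 (LinearEquiv.ofEq _ _ (LinearMap.ker_codRestrict _ _ _).symm) hZ
    · refine van_tors J c _ ?_ 1
      intro f hf x
      obtain ⟨⟨z, hz⟩, rfl⟩ := Submodule.mkQ_surjective _ x
      obtain ⟨s, hs⟩ := hd f hf
      obtain ⟨w, hw⟩ := homotopy2 d b s f hs z hz
      rw [← map_smul, Submodule.mkQ_apply, Submodule.Quotient.mk_eq_zero]
      exact ⟨w, Subtype.ext hw⟩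
  have hI := van_push J 1 (kb d b) (van_free J 1 (hR 1 (by omega)) _) hQ
  have hC : Van J 0 (ModuleCat.of R ((L0 ⊗[R] L0) ⧸ LinearMap.range (kb d b))) := by
    refine van_c J 0 (LinearMap.range (kb d b)).mkQ (Submodule.mkQ_surjective _)
      (van_free J 0 (hR 0 (by omega)) _) ?_
    exact van_equiv J 1 (LinearEquiv.ofEq _ _ (Submodule.ker_mkQ _).symm) hI
  have hmem : b i0 ⊗ₜ[R] b i0 ∈ LinearMap.range (kb d b) := by
    rw [← Submodule.Quotient.mk_eq_zero, ← Submodule.mkQ_apply]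
    refine van_zero J _ hC c _ ?_
    intro f hf
    obtain ⟨s, hs⟩ := hd f hf
    rw [← map_smul, Submodule.mkQ_apply, Submodule.Quotient.mk_eq_zero]
    refine ⟨s (b i0) ⊗ₜ b i0, ?_⟩
    rw [kb, LinearMap.comp_apply, LinearMap.rTensor_tmul, hs, ← TensorProduct.smul_tmul', map_smul,
      mu, bb_apply, min_self, max_self]
  let φ : L0 ⊗[R] L0 →ₗ[R] R := bb b fun i j => if i = i0 ∧ j = i0 then 1 else 0
  have hφ : ∀ q, φ (mu b q) = φ q := by
    intro q
    have : φ ∘ₗ mu b = φ := by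
      apply bb_ext b
      intro i j
      simp only [LinearMap.comp_apply, mu, bb_apply, φ]
      congr 1
      apply propext
      constructor
      · rintro ⟨h1, h2⟩
        rcases le_total i j with h | h
        · rw [min_eq_left h] at h1; rw [max_eq_right h] at h2; exact ⟨h1, h2⟩
        · rw [min_eq_right h] at h1; rw [max_eq_left h] at h2; exact ⟨h2, h1⟩
      · rintro ⟨rfl, rfl⟩; simp
    exact LinearMap.congr_fun this q
  have hmemJ : ∀ q, φ (kb d b q) ∈ J := by
    intro q
    rw [kb, LinearMap.comp_apply, hφ]
    induction q with
    | zero => simp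
    | add x y hx hy => rw [map_add, map_add]; exact J.add_mem hx hy
    | tmul x l =>
      rw [LinearMap.rTensor_tmul]
      let ψ : L0 →ₗ[R] R := φ ∘ₗ (TensorProduct.mk R L0 L0).flip l
      have h1 : ψ (d x) ∈ Submodule.map ψ (J • ⊤) := Submodule.mem_map_of_mem (hmin x)
      rw [Submodule.map_smul''] at h1
      have h2 : J • Submodule.map ψ ⊤ ≤ J := by
        rw [smul_eq_mul]; exact Ideal.mul_le_left
      exact h2 h1
  obtain ⟨q, hq⟩ := hmem
  have h1 := hmemJ q
  rw [hq] at h1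
  simp only [φ, bb_apply, and_self, if_true] at h1
  exact hJ ((Ideal.eq_top_iff_one _).2 h1)

end final

end W2
end W2main

/-- Whether `N` is cyclic or not, for any nonzero finite length
graded `S`-module `N` on `ℙⁿ` (`n ≥ 3`), the first syzygy bundle `P₁(N)` satisfies
`H²_*(Λ²P₁(N)) ≠ 0`. -/
theorem wedge2_first_syzygy_nonvanishing
    (K : Type) [Field K] (n : ℕ) (hn : 3 ≤ n)
    (N : Type) [AddCommGroup N] [Module (PolyS K n) N]
    (hN : Nontrivial N)
    (hNfl : IsGradedFiniteLength K n N)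
    (res : MinimalResolution K n N) :
    ¬ Subsingleton (Hstar K n 2 (⋀[PolyS K n]^2 ↥(LinearMap.range (res.d 1)))) := by
  intro hsub
  have hJ : irrel K n ≠ ⊤ := by
    have := W2.span_X_ne_top (K := K) (σ := Fin (n+1)) Set.univ
    rwa [Set.image_univ] at this
  obtain ⟨-, c, hc⟩ := hNfl
  have hfree0 := res.free 0
  have hfree1 := res.free 1
  have hfin0 := res.finite 0
  have hfin1 := res.finite 1
  let b := Module.finBasis (PolyS K n) (res.L 0)
  have i0 : Nonempty (Fin (Module.finrank (PolyS K n) (res.L 0))) := by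
    by_contra hempty
    rw [not_nonempty_iff] at hempty
    have h0 : Subsingleton (res.L 0) := b.repr.toEquiv.subsingleton
    obtain ⟨x, y, hxy⟩ := hN
    obtain ⟨u, rfl⟩ := res.aug_surjective x
    obtain ⟨v, rfl⟩ := res.aug_surjective y
    exact hxy (congrArg _ (Subsingleton.elim u v))
  have hd : ∀ f ∈ irrel K n ^ c, ∃ s : res.L 0 →ₗ[PolyS K n] res.L 1, ∀ x, res.d 0 (s x) = f • x := by
    intro f hf
    have h1 : ∀ i, ∃ y, res.d 0 y = f • b i := by
      intro i
      have : f • b i ∈ LinearMap.range (res.d 0) := by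
        rw [res.exact0, LinearMap.mem_ker, map_smul]
        exact Module.mem_annihilator.1 (hc hf) _
      exact this
    choose y hy using h1
    refine ⟨b.constr (PolyS K n) y, fun x => ?_⟩
    have h2 : res.d 0 ∘ₗ b.constr (PolyS K n) y = f • LinearMap.id := by
      refine b.ext fun i => ?_
      simp [hy]
    exact LinearMap.congr_fun h2 x
  have key : ∀ P : Submodule (PolyS K n) (res.L 1), P = LinearMap.ker (res.d 0) →
      Subsingleton (Hstar K n 2 (⋀[PolyS K n]^2 ↥P)) → False := by
    rintro P rfl hP
    exact W2.core (irrel K n) hJ c (fun i hi t => W2.ext_van n hn i hi _ rfl t) (res.d 0) b i0.some hd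
      (fun x => res.minimal 0 ⟨x, rfl⟩)
      (W2.van_of_subsingleton (irrel K n) 2 _ hP)
  exact key _ (res.exact 0) hsub
end
end
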